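/- For an irreducible complex representation π of GL_n(F_q), define its asymptotic rank to be the least integer k such that, for all sufficiently large m, there exists a representation ρ_m of GL_m(F_q) of low U-rank at most k (i.e., rank_{⌊m/2⌋,⌈m/2⌉}(ρ_m) ≤ k and k < ⌊m/2⌋) whose restriction to GL_n(F_q) (embedded as the top-left n×n block, extended by the identity) contains π as a subrepresentation. Then for every irreducible representation π of GL_n(F_q), the asymptotic rank of π equals the tensor rank of π. -/

import Mathlib

/-!
STATEMENT 19: For every irreducible representation π of GL_n(F_q), the
asymptotic rank of π equals the tensor rank of π.
-/

open Matrix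
open scoped MatrixGroups

namespace Stmt19

variable {F : Type} [Field F] [Fintype F] [DecidableEq F]

/-- The `n × n` matrix with the `a × b` matrix `X` placed in the block occupying
rows `0,…,a-1` and columns `n-b,…,n-1`, and `0` elsewhere. -/
def blockEmbed (n a b : ℕ) (X : Matrix (Fin a) (Fin b) F) : Matrix (Fin n) (Fin n) F :=
  Matrix.of fun i j =>
    if hi : (i : ℕ) < a then
      if hj : n - b ≤ (j : ℕ) ∧ (j : ℕ) - (n - b) < b then
        X ⟨i, hi⟩ ⟨(j : ℕ) - (n - b), hj.2⟩
      else 0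
    else 0

lemma blockEmbed_mul_blockEmbed {n a b : ℕ} (hab : a + b ≤ n)
    (X Y : Matrix (Fin a) (Fin b) F) :
    blockEmbed n a b X * blockEmbed n a b Y = 0 := by
  ext i j
  rw [Matrix.mul_apply, Matrix.zero_apply]
  apply Finset.sum_eq_zero
  intro k _
  rcases Nat.lt_or_ge (k : ℕ) a with hk | hk
  · have h2 : ¬ (n - b ≤ (k : ℕ) ∧ (k : ℕ) - (n - b) < b) := by
      rintro ⟨h, -⟩; omega
    have hz : blockEmbed n a b X i k = 0 := by
      unfold blockEmbed
      by_cases hi : (i : ℕ) < a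
      · rw [Matrix.of_apply, dif_pos hi, dif_neg h2]
      · rw [Matrix.of_apply, dif_neg hi]
    rw [hz, zero_mul]
  · have hz : blockEmbed n a b Y k j = 0 := by
      unfold blockEmbed
      rw [Matrix.of_apply, dif_neg (Nat.not_lt.2 hk)]
    rw [hz, mul_zero]

/-- The element `I_n + blockEmbed X` of `GL_n(F)`; for `a + b ≤ n` these elements
form the abelian subgroup `U_{a,b}` (identified with `(M_{a,b}(F), +)`). -/
def uU (n a b : ℕ) (hab : a + b ≤ n) (X : Matrix (Fin a) (Fin b) F) : GL (Fin n) F where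
  val := 1 + blockEmbed n a b X
  inv := 1 - blockEmbed n a b X
  val_inv := by
    have h := blockEmbed_mul_blockEmbed hab X X
    have e : (1 + blockEmbed n a b X) * (1 - blockEmbed n a b X)
        = 1 - blockEmbed n a b X * blockEmbed n a b X := by noncomm_ring
    rw [e, h, sub_zero]
  inv_val := by
    have h := blockEmbed_mul_blockEmbed hab X X
    have e : (1 - blockEmbed n a b X) * (1 + blockEmbed n a b X)
        = 1 - blockEmbed n a b X * blockEmbed n a b X := by noncomm_ring
    rw [e, h, sub_zero]

variable {V : Type} [AddCommGroup V] [Module ℂ V]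

/-- The character `γ_T` of `U_{a,b} ≅ M_{a,b}(F_q)`, `γ_T(X) = χ₀(trace (T*X))`,
appears in (the restriction to `U_{a,b}` of) the representation `π`, i.e. its
eigenspace is nonzero. -/
def CharAppears (χ₀ : AddChar F ℂ) {n : ℕ} (π : Representation ℂ (GL (Fin n) F) V)
    {a b : ℕ} (hab : a + b ≤ n) (T : Matrix (Fin b) (Fin a) F) : Prop :=
  ∃ v : V, v ≠ 0 ∧ ∀ X : Matrix (Fin a) (Fin b) F,
    π (uU n a b hab X) v = χ₀ ((T * X).trace) • v

/-- `rank_{a,b}(π) = k` : the maximal rank of a character of `U_{a,b}`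
appearing in `π|U_{a,b}` is `k`.  (The rank of `γ_T` is `rank T`.) -/
def HasRankAB (χ₀ : AddChar F ℂ) {n : ℕ} (π : Representation ℂ (GL (Fin n) F) V)
    {a b : ℕ} (hab : a + b ≤ n) (k : ℕ) : Prop :=
  (∃ T, CharAppears χ₀ π hab T ∧ T.rank = k) ∧
  (∀ T, CharAppears χ₀ π hab T → T.rank ≤ k)


/-- The `U`-rank of a representation `π` of `GL_n(F_q)` equals `k`:
this is `rank_{⌊n/2⌋,⌈n/2⌉}(π) = k`. -/
def HasURank (χ₀ : AddChar F ℂ) {n : ℕ} (π : Representation ℂ (GL (Fin n) F) V) (k : ℕ) : Prop :=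
  HasRankAB χ₀ π (show n / 2 + (n - n / 2) ≤ n by omega) k

/-- The subgroup `H_k ≤ GL_n(F)` of elements fixing the first `k` standard
basis vectors of `F^n` (equivalently, fixing pointwise every vector supported
in the first `k` coordinates). -/
def Hsub (n k : ℕ) : Subgroup (GL (Fin n) F) where
  carrier := {g | ∀ v : Fin n → F, (∀ i : Fin n, k ≤ (i : ℕ) → v i = 0) →
      (↑g : Matrix (Fin n) (Fin n) F) *ᵥ v = v}
  one_mem' := by intro v hv; simp
  mul_mem' := by
    intro g h hg hh v hv
    rw [Units.val_mul, ← Matrix.mulVec_mulVec, hh v hv, hg v hv]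
  inv_mem' := by
    intro g hg v hv
    calc (↑g⁻¹ : Matrix (Fin n) (Fin n) F) *ᵥ v
        = (↑g⁻¹ : Matrix (Fin n) (Fin n) F) *ᵥ ((↑g : Matrix (Fin n) (Fin n) F) *ᵥ v) := by
          rw [hg v hv]
      _ = ((↑g⁻¹ * ↑g : Matrix (Fin n) (Fin n) F)) *ᵥ v := Matrix.mulVec_mulVec ..
      _ = v := by rw [← Units.val_mul, inv_mul_cancel, Units.val_one, Matrix.one_mulVec]

/-- The permutation representation of `GL_n(F)` on complex-valued functions on
`M_{n,k}(F)`, by left matrix multiplication: `(g · f)(T) = f (g⁻¹ * T)`. -/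
def permRep (n k : ℕ) : Representation ℂ (GL (Fin n) F) (Matrix (Fin n) (Fin k) F → ℂ) where
  toFun g :=
    { toFun := fun f T => f ((↑g⁻¹ : Matrix (Fin n) (Fin n) F) * T)
      map_add' := fun _ _ => rfl
      map_smul' := fun _ _ => rfl }
  map_one' := by
    refine LinearMap.ext fun f => funext fun T => ?_
    show f ((↑(1 : GL (Fin n) F)⁻¹ : Matrix (Fin n) (Fin n) F) * T) = f T
    congr 1
    simp
  map_mul' := by
    intro g h
    refine LinearMap.ext fun f => funext fun T => ?_
    show f _ = f _
    congr 1
    simp [_root_.mul_inv_rev, Units.val_mul, Matrix.mul_assoc]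

/-- The determinant character `GL_n(F) → Fˣ`. -/
def detHom (n : ℕ) : GL (Fin n) F →* Fˣ :=
  Units.map Matrix.detMonoidHom

/-- The twist `(α ∘ det) ⊗ ρ` of a representation `ρ` of `GL_n(F)` by the
linear character `α ∘ det`. -/
def twistRep {n : ℕ} {V : Type} [AddCommGroup V] [Module ℂ V]
    (α : Fˣ →* ℂˣ) (ρ : Representation ℂ (GL (Fin n) F) V) :
    Representation ℂ (GL (Fin n) F) V where
  toFun g := ((α (detHom n g) : ℂˣ) : ℂ) • ρ g
  map_one' := by simp
  map_mul' := by
    intro g h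
    show ((α (detHom n (g * h)) : ℂˣ) : ℂ) • ρ (g * h)
        = (((α (detHom n g) : ℂˣ) : ℂ) • ρ g) * (((α (detHom n h) : ℂˣ) : ℂ) • ρ h)
    rw [smul_mul_assoc, mul_smul_comm, smul_smul, ← Units.val_mul, ← _root_.map_mul,
      ← _root_.map_mul, _root_.map_mul ρ]

/-- `ρ` occurs in `σ` : there is a nonzero intertwining operator from `ρ` to
`σ`.  (For irreducible `ρ` this says exactly that `ρ` occurs as a
subrepresentation of `σ`.) -/
def Occurs {G : Type} [Group G] {V W : Type} [AddCommGroup V] [Module ℂ V]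
    [AddCommGroup W] [Module ℂ W]
    (ρ : Representation ℂ G V) (σ : Representation ℂ G W) : Prop :=
  ∃ φ : V →ₗ[ℂ] W, φ ≠ 0 ∧ ∀ g, φ.comp (ρ g) = (σ g).comp φ

/-- `ρ` has a nonzero vector fixed by the subgroup `H`. -/
def HasFixedVec {G : Type} [Group G] {V : Type} [AddCommGroup V] [Module ℂ V]
    (ρ : Representation ℂ G V) (H : Subgroup G) : Prop :=
  ∃ v : V, v ≠ 0 ∧ ∀ h ∈ H, ρ h v = v

/-- `ρ` has a nonzero eigenvector for the subgroup `H`: a nonzero `v` with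
`ρ(h) v = c(h) • v` for all `h ∈ H`, for some character `c` of `H`. -/
def HasEigenVec {G : Type} [Group G] {V : Type} [AddCommGroup V] [Module ℂ V]
    (ρ : Representation ℂ G V) (H : Subgroup G) : Prop :=
  ∃ c : H →* ℂ, ∃ v : V, v ≠ 0 ∧ ∀ h : H, ρ (h : G) v = c h • v

/-- Irreducibility of a representation: the space is nonzero, and the only
invariant subspaces are `⊥` and `⊤`. -/
def IsIrred {G : Type} [Group G] {V : Type} [AddCommGroup V] [Module ℂ V]
    (ρ : Representation ℂ G V) : Prop :=
  (∃ v : V, v ≠ 0) ∧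
    ∀ p : Submodule ℂ V, (∀ g : G, ∀ v ∈ p, ρ g v ∈ p) → p = ⊥ ∨ p = ⊤

/-- The multiplicative embedding `A ↦ fromBlocks A 0 0 1` of `m × m` matrices
into `(Fin m ⊕ Fin r) × (Fin m ⊕ Fin r)` matrices. -/
def blockDiagHom (m r : ℕ) : Matrix (Fin m) (Fin m) F →* Matrix (Fin m ⊕ Fin r) (Fin m ⊕ Fin r) F where
  toFun A := Matrix.fromBlocks A 0 0 1
  map_one' := Matrix.fromBlocks_one
  map_mul' := by
    intro A B
    rw [Matrix.fromBlocks_multiply]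
    simp

/-- The standard embedding `GL_m(F) → GL_n(F)`, `A ↦ diag(A, I_{n-m})`
(top-left `m × m` block, extended by the identity matrix). -/
def glEmbed {m n : ℕ} (h : m ≤ n) : GL (Fin m) F →* GL (Fin n) F :=
  Units.map
    (((Matrix.reindexAlgEquiv F F
        ((finSumFinEquiv (m := m) (n := n - m)).trans (finCongr (by omega)))).toRingEquiv.toMonoidHom).comp
      (blockDiagHom m (n - m)))

/-- `π` has asymptotic rank at most `k` : for all sufficiently large `m` there
is a representation `ρ_m` of `GL_m(F_q)` of low `U`-rank at most `k`
(i.e. `rank_{⌊m/2⌋,⌈m/2⌉}(ρ_m) ≤ k` and `k < ⌊m/2⌋`) whose restriction to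
`GL_n(F_q)`, embedded as the top-left `n × n` block extended by the identity,
contains `π` as a subrepresentation. -/
def AsympRankLE (χ₀ : AddChar F ℂ) {n : ℕ} {V : Type} [AddCommGroup V] [Module ℂ V]
    (π : Representation ℂ (GL (Fin n) F) V) (k : ℕ) : Prop :=
  ∃ M : ℕ, ∀ m : ℕ, M ≤ m →
    ∃ (h : n ≤ m) (Vm : Type) (_ : AddCommGroup Vm) (_ : Module ℂ Vm)
      (_ : FiniteDimensional ℂ Vm) (ρm : Representation ℂ (GL (Fin m) F) Vm),
      k < m / 2 ∧
      (∀ T, CharAppears χ₀ ρm (show m / 2 + (m - m / 2) ≤ m by omega) T → T.rank ≤ k) ∧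
      Occurs π (ρm.comp (glEmbed h))

/-!
Let `ρ` be a representation of `GL_m` of low `U`-rank at most `k`. Among the pairs `(P, S)` of
`m × ι` matrices with jointly independent columns, choose one with `|ι|` maximal such that some
nonzero vector transforms under the unipotents `1 + P Y`, `Y P = 0`, by the character `χ(tr (Y S))`;
then `|ι| ≤ k`. By maximality, after a twist by a character of the determinant, some nonzero vector
is fixed by the stabilizer of the columns of `P` and `S`, so that the twist of `ρ` occurs in the
functions on `M_{m,t}` for some `t ≤ 2k`. For the least such `t`, an intertwiner to the functions on
`M_{m,t}` sees only matrices of full rank, and a character sum over the unipotents `1 + P Y` cannot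
vanish because one of its terms outweighs all the others together; this exhibits a character of
rank `t`, whence `t ≤ k`. Restricting functions on `M_{m,k}` to the matrices with prescribed last
`m - n` rows transfers the conclusion to `GL_n`. Conversely, the functions on `M_{m,k}` have
`U`-rank at most `k`, because `1 + X` fixes every matrix whose last rows are killed by `X`.
-/

section Characters

variable {K B C E : Type*} [Field K] [AddCommGroup B] [Module K B] [AddCommGroup C] [Module K C]
  [AddCommGroup E] [Module ℂ E] {χ : AddChar K ℂ}

theorem eq_of_forall_addChar_mul_eq (hχ : χ ≠ 1) {s t : K}
    (h : ∀ c, χ (c * s) = χ (c * t)) : s = t := by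
  by_contra hst
  refine AddChar.IsPrimitive.of_ne_one hχ (sub_ne_zero.2 hst) (DFunLike.ext _ _ fun c => ?_)
  rw [AddChar.mulShift_apply, sub_mul, AddChar.map_sub_eq_div, mul_comm s, mul_comm t, h,
    div_self ((AddChar.val_isUnit χ _).ne_zero), AddChar.one_apply]

theorem sum_addChar_dual_eq_zero [Fintype (Module.Dual K B)] (hχ : χ ≠ 1) {b : B} (hb : b ≠ 0) :
    ∑ ℓ : Module.Dual K B, χ (ℓ b) = 0 := by
  let ψ : AddChar (Module.Dual K B) ℂ := χ.compAddMonoidHom (LinearMap.applyₗ b).toAddMonoidHom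
  refine AddChar.sum_eq_zero_iff_ne_zero (ψ := ψ) |>.2 fun hψ => ?_
  obtain ⟨ℓ, hℓ⟩ := Module.Projective.exists_dual_ne_zero K hb
  refine hℓ (eq_of_forall_addChar_mul_eq hχ fun c => ?_)
  simpa [ψ] using DFunLike.congr_fun hψ (c • ℓ)

/-- Up to the factor `|B|`, the projection of a representation `σ` of a finite vector space `B` onto
its `χ ∘ ℓ`-isotypic component. -/
noncomputable def charSum [Fintype B] (χ : AddChar K ℂ)
    (σ : Representation ℂ (Multiplicative B) E) (ℓ : Module.Dual K B) : Module.End ℂ E :=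
  ∑ b, χ (-ℓ b) • σ (.ofAdd b)

theorem charSum_apply [Fintype B] (σ : Representation ℂ (Multiplicative B) E)
    (ℓ : Module.Dual K B) (v : E) : charSum χ σ ℓ v = ∑ b, χ (-ℓ b) • σ (.ofAdd b) v := by
  simp only [charSum, LinearMap.sum_apply, LinearMap.smul_apply]

theorem apply_charSum [Fintype B] (σ : Representation ℂ (Multiplicative B) E)
    (ℓ : Module.Dual K B) (b : B) (v : E) :
    σ (.ofAdd b) (charSum χ σ ℓ v) = χ (ℓ b) • charSum χ σ ℓ v := by
  simp only [charSum_apply, map_sum, map_smul, Finset.smul_sum, smul_smul]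
  refine Fintype.sum_equiv (Equiv.addLeft b) _ _ fun c => ?_
  dsimp only [Equiv.coe_addLeft]
  rw [ofAdd_add, map_mul, Module.End.mul_apply, ← AddChar.map_add_eq_mul, map_add ℓ, neg_add,
    add_neg_cancel_left]

theorem charSum_apply_comm [Fintype B] (σ : Representation ℂ (Multiplicative B) E)
    (ℓ : Module.Dual K B) (b : B) (v : E) :
    charSum χ σ ℓ (σ (.ofAdd b) v) = σ (.ofAdd b) (charSum χ σ ℓ v) := by
  simp only [charSum_apply, map_sum, map_smul]
  simp only [← Module.End.mul_apply, ← map_mul, mul_comm]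

theorem sum_charSum_apply [Fintype B] [Fintype (Module.Dual K B)] (hχ : χ ≠ 1)
    (σ : Representation ℂ (Multiplicative B) E) (v : E) :
    ∑ ℓ, charSum χ σ ℓ v = (Fintype.card (Module.Dual K B) : ℂ) • v := by
  simp only [charSum_apply]
  rw [Finset.sum_comm, Finset.sum_eq_single (0 : B)]
  · simp [Nat.cast_smul_eq_nsmul]
  · intro b _ hb
    simp only [← map_neg, ← Finset.sum_smul, sum_addChar_dual_eq_zero hχ (neg_ne_zero.2 hb),
      zero_smul]
  · simp

theorem eq_of_charSum_apply_ne_zero [Fintype B] (hχ : χ ≠ 1)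
    {σ : Representation ℂ (Multiplicative B) E} {j : C →ₗ[K] B} {ℓ' : Module.Dual K C} {v : E}
    (hv : ∀ c, σ (.ofAdd (j c)) v = χ (ℓ' c) • v) {ℓ : Module.Dual K B}
    (hℓ : charSum χ σ ℓ v ≠ 0) (c : C) : ℓ (j c) = ℓ' c := by
  have same_eigenvalue (c : C) : χ (ℓ (j c)) = χ (ℓ' c) := by
    refine smul_left_injective ℂ hℓ ?_
    simp only
    rw [← apply_charSum, ← charSum_apply_comm, hv, map_smul]
  refine eq_of_forall_addChar_mul_eq hχ fun t => ?_
  simpa using same_eigenvalue (t • c)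

theorem exists_charSum_apply_ne_zero [Finite K] [Fintype B] (hχ : χ ≠ 1)
    (σ : Representation ℂ (Multiplicative B) E) {v : E} (hv : v ≠ 0) :
    ∃ ℓ : Module.Dual K B, charSum χ σ ℓ v ≠ 0 := by
  have : Fintype (Module.Dual K B) := @Fintype.ofFinite _ (Module.finite_of_finite K)
  by_contra! h
  refine smul_ne_zero (Nat.cast_ne_zero.2 Fintype.card_ne_zero) hv
    ((sum_charSum_apply hχ σ v).symm.trans (Finset.sum_eq_zero fun ℓ _ => h ℓ))

theorem exists_charSum_apply_ne_zero_of_apply_ne [Finite K] [Fintype B] (hχ : χ ≠ 1)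
    (σ : Representation ℂ (Multiplicative B) E) {v : E} {b : B} (hv : σ (.ofAdd b) v ≠ v) :
    ∃ ℓ : Module.Dual K B, charSum χ σ ℓ v ≠ 0 ∧ ℓ b ≠ 0 := by
  obtain ⟨ℓ, hℓ⟩ := exists_charSum_apply_ne_zero hχ σ (sub_ne_zero.2 hv)
  rw [map_sub, charSum_apply_comm, apply_charSum] at hℓ
  refine ⟨ℓ, fun h => hℓ ?_, fun h => hℓ ?_⟩
  · rw [h, smul_zero, sub_zero]
  · rw [h, AddChar.map_zero_eq_one, one_smul, sub_self]

end Characters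

section LinearAlgebra

variable {K N ι κ : Type*} [Field K] [Fintype ι] [Fintype κ]

theorem mulVec_injective_of_mul_eq_one [Fintype N] [DecidableEq ι] {A : Matrix N ι K}
    {L : Matrix ι N K} (h : L * A = 1) : Function.Injective A.mulVec := by
  refine Function.LeftInverse.injective (g := L.mulVec) fun v => ?_
  rw [mulVec_mulVec, h, one_mulVec]

theorem exists_mul_eq_one_of_mulVec_injective [Fintype N] [DecidableEq ι]
    {A : Matrix N ι K} (hA : Function.Injective A.mulVec) : ∃ L : Matrix ι N K, L * A = 1 := by
  classical
  obtain ⟨f, hf⟩ := A.mulVecLin.exists_leftInverse_of_injective (LinearMap.ker_eq_bot.2 hA)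
  refine ⟨f.toMatrix', ext_of_mulVec_single fun j => ?_⟩
  rw [← mulVec_mulVec, LinearMap.toMatrix'_mulVec, one_mulVec]
  exact LinearMap.congr_fun hf _

theorem exists_GL_mul_eq [Fintype N] [DecidableEq N] {A B : Matrix N ι K}
    (hA : Function.Injective A.mulVec) (hB : Function.Injective B.mulVec) :
    ∃ g : GL N K, (g : Matrix N N K) * A = B := by
  classical
  let eA := LinearEquiv.ofInjective A.mulVecLin hA
  let eB := LinearEquiv.ofInjective B.mulVecLin hB
  obtain ⟨g, hg⟩ := Submodule.exists_linearEquiv_restrict_eq (eA.symm.trans eB)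
  refine ⟨GeneralLinearGroup.toLin.symm (LinearMap.GeneralLinearGroup.ofLinearEquiv g),
    ext_of_mulVec_single fun j => ?_⟩
  have hgj := hg (eA (Pi.single j 1))
  rw [LinearEquiv.trans_apply, LinearEquiv.symm_apply_apply] at hgj
  rw [← mulVec_mulVec]
  exact (LinearMap.toMatrix'_mulVec g.toLinearMap _).trans hgj.symm

theorem exists_forall_dual_eq_trace (ℓ : Module.Dual K (Matrix ι κ K)) :
    ∃ T : Matrix κ ι K, ∀ X, ℓ X = (X * T).trace := by
  classical
  refine ⟨.of fun j i => ℓ (.single i j 1), fun X => ?_⟩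
  conv_lhs => rw [matrix_eq_sum_single X]
  simp only [map_sum, trace, diag, mul_apply, of_apply]
  refine Finset.sum_congr rfl fun i _ => Finset.sum_congr rfl fun j _ => ?_
  rw [← smul_eq_mul, ← map_smul, smul_single, smul_eq_mul, mul_one]

theorem exists_dotProduct_ne_zero_of_notMem [Fintype N] {p : Submodule K (N → K)} {x : N → K}
    (hx : x ∉ p) :
    ∃ y : N → K, y ⬝ᵥ x ≠ 0 ∧ ∀ z ∈ p, y ⬝ᵥ z = 0 := by
  classical
  obtain ⟨f, hfx, hfp⟩ := Submodule.exists_dual_map_eq_bot_of_notMem hx inferInstance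
  obtain ⟨y, rfl⟩ := (dotProductEquiv K N).surjective f
  refine ⟨y, hfx, fun z hz => ?_⟩
  have hyz : y ⬝ᵥ z ∈ p.map (dotProductEquiv K N y) := ⟨z, hz, rfl⟩
  rwa [hfp, Submodule.mem_bot] at hyz

theorem vecMul_eq_zero_iff_forall_range [Fintype N] {A : Matrix N ι K} {y : N → K} :
    y ᵥ* A = 0 ↔ ∀ z ∈ LinearMap.range A.mulVecLin, y ⬝ᵥ z = 0 := by
  classical
  simp only [LinearMap.mem_range, mulVecLin_apply, forall_exists_index, forall_apply_eq_imp_iff,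
    dotProduct_mulVec]
  exact ⟨fun h a => by rw [h, zero_dotProduct],
    fun h => funext fun j => by simpa using h (Pi.single j 1)⟩

theorem replicateCol_unit_mulVec (x : N → K) (t : Unit → K) :
    replicateCol Unit x *ᵥ t = t () • x := by
  ext i
  simp [mulVec, dotProduct, mul_comm]

theorem mulVec_injective_fromCols_replicateCol {A : Matrix N ι K} {x : N → K}
    (hA : Function.Injective A.mulVec) (hx : x ∉ LinearMap.range A.mulVecLin) :
    Function.Injective (fromCols A (replicateCol Unit x)).mulVec := by
  refine (injective_iff_map_eq_zero (mulVecLin _)).2 fun c hc => ?_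
  rw [mulVecLin_apply, fromCols_mulVec, replicateCol_unit_mulVec, Function.comp_apply] at hc
  have last_eq_zero : c (.inr ()) = 0 := by
    by_contra ht
    refine hx ((Submodule.smul_mem_iff _ ht).1 ⟨-(c ∘ Sum.inl), ?_⟩)
    rw [map_neg, mulVecLin_apply, eq_neg_of_add_eq_zero_left hc, neg_neg]
  have init_eq_zero : c ∘ Sum.inl = 0 := by
    rw [last_eq_zero, zero_smul, add_zero] at hc
    exact hA (hc.trans (mulVec_zero A).symm)
  exact funext (Sum.rec (congrFun init_eq_zero) fun _ => last_eq_zero)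

end LinearAlgebra

section Coordinates

variable {K N ι κ : Type*} [Field K] [DecidableEq N]

/-- The matrix of the coordinate embedding `K^ι → K^N` along `e : ι → N`. -/
def coordMatrix (K : Type*) [Field K] (e : ι → N) : Matrix N ι K :=
  (1 : Matrix N N K).submatrix id e

theorem coordMatrix_transpose_mul [Fintype N] (e : ι → N) (A : Matrix N κ K) :
    (coordMatrix K e)ᵀ * A = A.submatrix e id := by
  ext i j
  simp [coordMatrix, mul_apply, one_apply]

theorem coordMatrix_transpose_mul_self [Fintype N] [DecidableEq ι] {e : ι → N}
    (he : Function.Injective e) : (coordMatrix K e)ᵀ * coordMatrix K e = 1 := by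
  rw [coordMatrix_transpose_mul]
  ext i j
  simp [coordMatrix, one_apply, he.eq_iff]

theorem coordMatrix_transpose_mul_eq_zero [Fintype N] {e : ι → N} {f : κ → N}
    (h : ∀ i j, e i ≠ f j) : (coordMatrix K e)ᵀ * coordMatrix K f = 0 := by
  rw [coordMatrix_transpose_mul]
  ext i j
  simp [coordMatrix, one_apply, h i j]

theorem coordMatrix_mul_apply [Fintype ι] {e : ι → N} (he : Function.Injective e)
    (A : Matrix ι κ K) (i : ι) (k : κ) : (coordMatrix K e * A) (e i) k = A i k := by
  classical
  simp [coordMatrix, mul_apply, one_apply, he.eq_iff]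

theorem coordMatrix_mul_apply_of_notMem [Fintype ι] {e : ι → N} {x : N} (hx : x ∉ Set.range e)
    (A : Matrix ι κ K) (k : κ) : (coordMatrix K e * A) x k = 0 := by
  rw [mul_apply]
  refine Finset.sum_eq_zero fun i _ => ?_
  rw [coordMatrix, submatrix_apply, id_eq, one_apply_ne fun h => hx ⟨i, h.symm⟩, zero_mul]

theorem mul_coordMatrix_transpose_apply [Fintype ι] {e : ι → N} (he : Function.Injective e)
    (A : Matrix κ ι K) (k : κ) (i : ι) : (A * (coordMatrix K e)ᵀ) k (e i) = A k i := by
  rw [← transpose_transpose A, ← transpose_mul, transpose_apply, coordMatrix_mul_apply he,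
    transpose_transpose, transpose_apply]

theorem mul_coordMatrix_transpose_apply_of_notMem [Fintype ι] {e : ι → N} {x : N}
    (hx : x ∉ Set.range e) (A : Matrix κ ι K) (k : κ) : (A * (coordMatrix K e)ᵀ) k x = 0 := by
  rw [← transpose_transpose A, ← transpose_mul, transpose_apply,
    coordMatrix_mul_apply_of_notMem hx]

end Coordinates

theorem exists_mul_eq_one_of_card_le {K N ι : Type*} [Field K] [Fintype N] [Fintype ι]
    [DecidableEq ι] (h : Fintype.card ι ≤ Fintype.card N) :
    ∃ (L : Matrix ι N K) (A : Matrix N ι K), L * A = 1 := by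
  classical
  obtain ⟨e⟩ := Function.Embedding.nonempty_of_card_le h
  exact ⟨_, _, coordMatrix_transpose_mul_self e.injective⟩

section Unipotent

variable {K N ι κ E : Type*} [Field K] [Fintype N] [DecidableEq N] [Fintype ι]
  [AddCommGroup E] [Module ℂ E]

/-- The unipotent element `1 + P Y` of `GL_N(K)`, where `Y P = 0`. -/
@[simps]
def unipotent (P : Matrix N ι K) (Y : Matrix ι N K) (h : Y * P = 0) : GL N K where
  val := 1 + P * Y
  inv := 1 - P * Y
  val_inv := by
    have hPY : P * Y * (P * Y) = 0 := by rw [Matrix.mul_assoc, ← Matrix.mul_assoc Y, h]; simp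
    rw [mul_sub, mul_one, add_mul, one_mul, hPY, add_zero, add_sub_cancel_right]
  inv_val := by
    have hPY : P * Y * (P * Y) = 0 := by rw [Matrix.mul_assoc, ← Matrix.mul_assoc Y, h]; simp
    rw [mul_add, mul_one, sub_mul, one_mul, hPY, sub_zero, sub_add_cancel]

theorem unipotent_add {P : Matrix N ι K} {Y Y' : Matrix ι N K} (h : Y * P = 0) (h' : Y' * P = 0)
    (hadd : (Y + Y') * P = 0) :
    unipotent P (Y + Y') hadd = unipotent P Y h * unipotent P Y' h' := by
  have hcross : P * Y * (P * Y') = 0 := by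
    rw [Matrix.mul_assoc, ← Matrix.mul_assoc Y, h]; simp
  apply Units.ext
  rw [Units.val_mul]
  simp only [val_unipotent, Matrix.add_mul, Matrix.mul_add, Matrix.one_mul, Matrix.mul_one, hcross]
  abel

theorem unipotent_mul_comm {P : Matrix N ι K} {Y Y' : Matrix ι N K} (h : Y * P = 0)
    (h' : Y' * P = 0) :
    unipotent P Y h * unipotent P Y' h' = unipotent P Y' h' * unipotent P Y h := by
  have hadd : (Y + Y') * P = 0 := by rw [Matrix.add_mul, h, h', add_zero]
  rw [← unipotent_add h h' hadd, ← unipotent_add h' h (by rwa [add_comm])]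
  simp only [add_comm]

/-- The homomorphism `Z ↦ 1 + P Z Q` from `(M_{ι,κ}(K), +)` to `GL_N(K)`, where `Q P = 0`. -/
def unipotentHom [Fintype κ] (P : Matrix N ι K) (Q : Matrix κ N K) (h : Q * P = 0) :
    Multiplicative (Matrix ι κ K) →* GL N K where
  toFun Z := unipotent P (Z.toAdd * Q) (by rw [Matrix.mul_assoc, h, Matrix.mul_zero])
  map_one' := Units.ext (by simp)
  map_mul' Z Z' := by
    simp only [toAdd_mul, Matrix.add_mul]
    exact unipotent_add _ _ _

theorem val_unipotentHom_ofAdd [Fintype κ] (P : Matrix N ι K) (Q : Matrix κ N K) (h : Q * P = 0)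
    (Z : Matrix ι κ K) :
    (unipotentHom P Q h (.ofAdd Z) : Matrix N N K) = 1 + P * (Z * Q) := rfl

/-- The simultaneous eigenspace of the elements `1 + P Y`, `Y P = 0`, for the character
`Y ↦ χ (tr (Y S))`. -/
def unipotentEigenspace (χ : AddChar K ℂ) (ρ : Representation ℂ (GL N K) E)
    (P S : Matrix N ι K) : Submodule ℂ E where
  carrier := {v | ∀ (Y : Matrix ι N K) (h : Y * P = 0), ρ (unipotent P Y h) v = χ (Y * S).trace • v}
  zero_mem' Y h := by rw [map_zero, smul_zero]
  add_mem' hv hw Y h := by rw [map_add, hv Y h, hw Y h, smul_add]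
  smul_mem' c v hv Y h := by rw [map_smul, hv Y h, smul_comm]

theorem apply_mem_unipotentEigenspace {χ : AddChar K ℂ} {ρ : Representation ℂ (GL N K) E}
    {P S : Matrix N ι K} {v : E} (hv : v ∈ unipotentEigenspace χ ρ P S) (g : GL N K) :
    ρ g v ∈ unipotentEigenspace χ ρ ((g : Matrix N N K) * P) ((g : Matrix N N K) * S) := by
  intro Y h
  have h' : Y * (g : Matrix N N K) * P = 0 := by rw [Matrix.mul_assoc, h]
  have conj : unipotent ((g : Matrix N N K) * P) Y h * g =
      g * unipotent P (Y * (g : Matrix N N K)) h' := by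
    apply Units.ext
    simp only [Units.val_mul, val_unipotent, Matrix.add_mul, Matrix.mul_add, Matrix.one_mul,
      Matrix.mul_one, Matrix.mul_assoc]
  rw [← Module.End.mul_apply, ← map_mul, conj, map_mul, Module.End.mul_apply, hv, map_smul,
    Matrix.mul_assoc]

theorem one_sub_mul_mul_of_mul_eq_one [DecidableEq ι] {P : Matrix N ι K} {L : Matrix ι N K}
    (hL : L * P = 1) : (1 - P * L) * P = 0 := by
  rw [Matrix.sub_mul, Matrix.one_mul, Matrix.mul_assoc, hL, Matrix.mul_one, sub_self]

theorem unipotentHom_ofAdd_eq_unipotent {P : Matrix N ι K} {Q : Matrix N N K} (hQ : Q * P = 0)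
    {Y : Matrix ι N K} (hYP : Y * P = 0) (hYQ : Y * Q = Y) :
    unipotentHom P Q hQ (.ofAdd Y) = unipotent P Y hYP :=
  Units.ext (by rw [val_unipotentHom_ofAdd, val_unipotent, hYQ])

end Unipotent

section URank

variable {K : Type} [Field K] {m a b : ℕ}

/-- The matrix of the embedding of `K^a` into `K^m` as the first `a` coordinates. -/
def firstCoords (K : Type) [Field K] (h : a ≤ m) : Matrix (Fin m) (Fin a) K :=
  coordMatrix K (Fin.castLE h)

/-- The index of the `j`-th among the last `b` of `m` coordinates. -/
def lastIndex (h : b ≤ m) (j : Fin b) : Fin m := ⟨m - b + j, by lia⟩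

/-- The matrix of the embedding of `K^b` into `K^m` as the last `b` coordinates. -/
def lastCoords (K : Type) [Field K] (h : b ≤ m) : Matrix (Fin m) (Fin b) K :=
  coordMatrix K (lastIndex h)

theorem lastIndex_injective (h : b ≤ m) : Function.Injective (lastIndex h) := fun i j hij => by
  simpa [lastIndex, Fin.ext_iff] using hij

theorem firstCoords_transpose_mul_self (h : a ≤ m) :
    (firstCoords K h)ᵀ * firstCoords K h = 1 :=
  coordMatrix_transpose_mul_self (Fin.castLE_injective h)

theorem lastCoords_transpose_mul_self (h : b ≤ m) : (lastCoords K h)ᵀ * lastCoords K h = 1 :=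
  coordMatrix_transpose_mul_self (lastIndex_injective h)

theorem lastCoords_transpose_mul_firstCoords (hab : a + b ≤ m) (ha : a ≤ m) (hb : b ≤ m) :
    (lastCoords K hb)ᵀ * firstCoords K ha = 0 :=
  coordMatrix_transpose_mul_eq_zero fun i j h => by
    simp only [lastIndex, Fin.ext_iff, Fin.val_castLE] at h
    lia

theorem blockEmbed_eq (ha : a ≤ m) (hb : b ≤ m) (X : Matrix (Fin a) (Fin b) K) :
    blockEmbed m a b X = firstCoords K ha * (X * (lastCoords K hb)ᵀ) := by
  ext i j
  simp only [blockEmbed, of_apply]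
  split_ifs with hi hj
  · obtain ⟨i, rfl⟩ : ∃ i', Fin.castLE ha i' = i := ⟨⟨i, hi⟩, rfl⟩
    obtain ⟨j, rfl⟩ : ∃ j', lastIndex hb j' = j :=
      ⟨⟨j - (m - b), hj.2⟩, Fin.ext (Nat.add_sub_cancel' hj.1)⟩
    rw [firstCoords, coordMatrix_mul_apply (Fin.castLE_injective ha), lastCoords,
      mul_coordMatrix_transpose_apply (lastIndex_injective hb)]
    exact congrArg (X _) (Fin.ext (Nat.add_sub_cancel_left ..))
  · obtain ⟨i, rfl⟩ : ∃ i', Fin.castLE ha i' = i := ⟨⟨i, hi⟩, rfl⟩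
    rw [firstCoords, coordMatrix_mul_apply (Fin.castLE_injective ha), lastCoords,
      mul_coordMatrix_transpose_apply_of_notMem]
    rintro ⟨j', rfl⟩
    exact hj (by simp [lastIndex])
  · rw [firstCoords, coordMatrix_mul_apply_of_notMem]
    rintro ⟨i', rfl⟩
    exact hi i'.2

variable {F : Type} [Field F] [Fintype F] [DecidableEq F] {E : Type} [AddCommGroup E] [Module ℂ E]
  {χ : AddChar F ℂ} {ρ : Representation ℂ (GL (Fin m) F) E}

theorem uU_eq_unipotentHom (hab : a + b ≤ m) (ha : a ≤ m) (hb : b ≤ m)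
    (X : Matrix (Fin a) (Fin b) F) : uU m a b hab X =
      unipotentHom (firstCoords F ha) (lastCoords F hb)ᵀ
        (lastCoords_transpose_mul_firstCoords hab ha hb) (.ofAdd X) :=
  Units.ext (congrArg (1 + ·) (blockEmbed_eq ha hb X))

theorem exists_uU_eq_unipotent (hab : a + b ≤ m) (ha : a ≤ m) (hb : b ≤ m) {ι : Type*} [Fintype ι]
    (A : Matrix (Fin a) ι F) (C : Matrix ι ι F) (B : Matrix ι (Fin b) F) :
    ∃ h, uU m a b hab (A * C * B) =
      unipotent (firstCoords F ha * A) (C * B * (lastCoords F hb)ᵀ) h := by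
  refine ⟨?_, ?_⟩
  · rw [Matrix.mul_assoc, ← Matrix.mul_assoc _ᵀ, lastCoords_transpose_mul_firstCoords hab,
      Matrix.zero_mul, Matrix.mul_zero]
  · rw [uU_eq_unipotentHom hab ha hb]
    apply Units.ext
    simp only [val_unipotentHom_ofAdd, val_unipotent, Matrix.mul_assoc]

theorem exists_charAppears_card_le_rank (hχ : χ ≠ 1) (hab : a + b ≤ m) {ι : Type*} [Fintype ι]
    (A : Matrix (Fin a) ι F) (B : Matrix ι (Fin b) F) {v : E} (hv0 : v ≠ 0)
    (hv : ∀ C : Matrix ι ι F, ρ (uU m a b hab (A * C * B)) v = χ C.trace • v) :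
    ∃ T, CharAppears χ ρ hab T ∧ Fintype.card ι ≤ T.rank := by
  classical
  have ha : a ≤ m := by lia
  have hb : b ≤ m := by lia
  let σ := ρ.comp (unipotentHom (firstCoords F ha) (lastCoords F hb)ᵀ
    (lastCoords_transpose_mul_firstCoords hab ha hb))
  let j : Matrix ι ι F →ₗ[F] Matrix (Fin a) (Fin b) F :=
    mulRightLinearMap _ F B ∘ₗ mulLeftLinearMap _ F A
  have hσ (X) : σ (.ofAdd X) = ρ (uU m a b hab X) := by rw [uU_eq_unipotentHom hab ha hb]; rfl
  have hσv (C) : σ (.ofAdd (j C)) v = χ (traceLinearMap ι F F C) • v := by rw [hσ]; exact hv C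
  obtain ⟨ℓ, hℓ⟩ := exists_charSum_apply_ne_zero hχ σ hv0
  obtain ⟨T, hT⟩ := exists_forall_dual_eq_trace ℓ
  refine ⟨T, ⟨_, hℓ, fun X => ?_⟩, ?_⟩
  · rw [← hσ, apply_charSum, hT, trace_mul_comm]
  have hBTA : B * T * A = 1 := by
    refine ext_iff_trace_mul_left.2 fun C => ?_
    have hjC : (A * C * B * T).trace = C.trace :=
      (hT _).symm.trans (eq_of_charSum_apply_ne_zero hχ hσv hℓ C)
    rw [Matrix.mul_one, ← hjC, trace_mul_comm, Matrix.mul_assoc, trace_mul_comm]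
    simp only [Matrix.mul_assoc]
  calc Fintype.card ι = (B * T * A).rank := by rw [hBTA, rank_one]
    _ ≤ (B * T).rank := rank_mul_le_left ..
    _ ≤ T.rank := rank_mul_le_right ..

theorem mulVec_injective_fromCols_firstCoords_lastCoords {K : Type} [Field K] (hab : a + b ≤ m)
    (ha : a ≤ m) (hb : b ≤ m) {ι : Type*} [Fintype ι] [DecidableEq ι]
    {A : Matrix (Fin a) ι K} {B : Matrix (Fin b) ι K} {A' : Matrix ι (Fin a) K}
    {B' : Matrix ι (Fin b) K} (hA : A' * A = 1) (hB : B' * B = 1) :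
    Function.Injective (fromCols (firstCoords K ha * A) (lastCoords K hb * B)).mulVec := by
  refine mulVec_injective_of_mul_eq_one
    (L := fromRows (A' * (firstCoords K ha)ᵀ) (B' * (lastCoords K hb)ᵀ)) ?_
  have cross : (firstCoords K ha)ᵀ * lastCoords K hb = 0 := by
    rw [← transpose_inj, transpose_mul, transpose_transpose, transpose_zero,
      lastCoords_transpose_mul_firstCoords hab]
  have mul_mul_mul {k l : ℕ} (X : Matrix ι (Fin k) K) (Y : Matrix (Fin k) (Fin m) K)
      (Z : Matrix (Fin m) (Fin l) K) (W : Matrix (Fin l) ι K) :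
      X * Y * (Z * W) = X * (Y * Z) * W := by simp only [Matrix.mul_assoc]
  simp only [fromRows_mul_fromCols, mul_mul_mul, firstCoords_transpose_mul_self, cross,
    lastCoords_transpose_mul_self, lastCoords_transpose_mul_firstCoords hab, Matrix.mul_one,
    Matrix.mul_zero, Matrix.zero_mul, hA, hB, fromBlocks_one]

theorem card_le_of_mem_unipotentEigenspace (hχ : χ ≠ 1) (hab : a + b ≤ m) {k : ℕ}
    (hρ : ∀ T, CharAppears χ ρ hab T → T.rank ≤ k) {ι : Type*} [Fintype ι]
    (hιa : Fintype.card ι ≤ a) (hιb : Fintype.card ι ≤ b) {P S : Matrix (Fin m) ι F}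
    (hPS : Function.Injective (fromCols P S).mulVec) {v : E} (hv0 : v ≠ 0)
    (hv : v ∈ unipotentEigenspace χ ρ P S) : Fintype.card ι ≤ k := by
  classical
  have ha : a ≤ m := by lia
  have hb : b ≤ m := by lia
  rw [← Fintype.card_fin a] at hιa
  rw [← Fintype.card_fin b] at hιb
  obtain ⟨A', A, hA⟩ := exists_mul_eq_one_of_card_le (K := F) hιa
  obtain ⟨B', B, hB⟩ := exists_mul_eq_one_of_card_le (K := F) hιb
  obtain ⟨g, hg⟩ := exists_GL_mul_eq hPS
    (mulVec_injective_fromCols_firstCoords_lastCoords hab ha hb hA hB)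
  rw [mul_fromCols, fromCols_ext_iff] at hg
  obtain ⟨hgP, hgS⟩ := hg
  have hgv := apply_mem_unipotentEigenspace hv g
  rw [hgP, hgS] at hgv
  have hgv0 : ρ g v ≠ 0 := fun h => hv0 <| (ρ.apply_bijective g).injective (by rw [h, map_zero])
  obtain ⟨T, hT, hrank⟩ := exists_charAppears_card_le_rank hχ hab A B' hgv0 fun C => by
    obtain ⟨h, hU⟩ := exists_uU_eq_unipotent hab ha hb A C B'
    rw [hU, hgv, Matrix.mul_assoc, ← Matrix.mul_assoc _ᵀ, lastCoords_transpose_mul_self,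
      Matrix.one_mul, Matrix.mul_assoc, hB, Matrix.mul_one]
  exact hrank.trans (hρ T hT)

end URank

section RankOne

variable {K N : Type*} [Field K] [Fintype N] [DecidableEq N] {x x' y y' : N → K}

theorem det_one_add_vecMulVec (x y : N → K) : (1 + vecMulVec x y).det = 1 + y ⬝ᵥ x := by
  rw [vecMulVec_eq Unit, det_one_add_replicateCol_mul_replicateRow]

/-- The element `1 + x yᵀ` of `GL_N(K)`: a transvection if `y ⬝ᵥ x = 0`, a dilation otherwise. -/
def rankOne (x y : N → K) (h : 1 + y ⬝ᵥ x ≠ 0) : GL N K :=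
  GeneralLinearGroup.mkOfDetNeZero (1 + vecMulVec x y) (by rwa [det_one_add_vecMulVec])

theorem val_rankOne (h : 1 + y ⬝ᵥ x ≠ 0) : (rankOne x y h : Matrix N N K) = 1 + vecMulVec x y :=
  rfl

theorem rankOne_mulVec (h : 1 + y ⬝ᵥ x ≠ 0) (z : N → K) :
    (rankOne x y h : Matrix N N K) *ᵥ z = z + (y ⬝ᵥ z) • x := by
  rw [val_rankOne, add_mulVec, one_mulVec, vecMulVec_mulVec, op_smul_eq_smul]

theorem one_add_ne_zero_of_eq_zero {t : K} (h : t = 0) : 1 + t ≠ 0 := by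
  rw [h, add_zero]; exact one_ne_zero

theorem rankOne_add_left (h' : y ⬝ᵥ x' = 0) (h : 1 + y ⬝ᵥ x ≠ 0)
    (hadd : 1 + y ⬝ᵥ (x + x') ≠ 0) :
    rankOne (x + x') y hadd = rankOne x y h * rankOne x' y (one_add_ne_zero_of_eq_zero h') := by
  apply Units.ext
  rw [Units.val_mul, val_rankOne, val_rankOne, val_rankOne, add_mul, mul_add, mul_add,
    vecMulVec_mul_vecMulVec, h', add_vecMulVec]
  simp [add_assoc, add_comm]

end RankOne

section MaximalPair

variable {K N ι κ E : Type*} [Field K] [Fintype ι] [Fintype κ] [AddCommGroup E] [Module ℂ E]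
  {P S : Matrix N ι K} {x y : N → K}

theorem mulVec_injective_fromCols_iff {A : Matrix N ι K} {B : Matrix N κ K} :
    Function.Injective (fromCols A B).mulVec ↔
      ∀ a b, A *ᵥ a + B *ᵥ b = 0 → a = 0 ∧ b = 0 := by
  rw [← coe_mulVecLin, injective_iff_map_eq_zero]
  simp only [mulVecLin_apply, fromCols_mulVec]
  refine ⟨fun h a b hab => ?_, fun h c hc => ?_⟩
  · have := h (Sum.elim a b) hab
    exact ⟨funext fun i => congrFun this (.inl i), funext fun i => congrFun this (.inr i)⟩
  · obtain ⟨ha, hb⟩ := h _ _ hc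
    exact funext (Sum.rec (congrFun ha) (congrFun hb))

theorem trace_fromBlocks (A : Matrix ι ι K) (B : Matrix ι κ K) (C : Matrix κ ι K)
    (D : Matrix κ κ K) : (fromBlocks A B C D).trace = A.trace + D.trace := by
  simp [trace, Fintype.sum_sum_type]

variable [Fintype N]

theorem exists_dotProduct_eq_zero_notMem {p : Submodule K (N → K)} (y : N → K)
    (hp : Module.finrank K p + 1 < Fintype.card N) : ∃ x, y ⬝ᵥ x = 0 ∧ x ∉ p := by
  classical
  by_contra! h
  have ker_le : Module.finrank K (LinearMap.ker (dotProductEquiv K N y)) ≤ Module.finrank K p :=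
    Submodule.finrank_mono fun x hx => h x hx
  have rank_nullity := LinearMap.finrank_range_add_finrank_ker (dotProductEquiv K N y)
  have range_le := Submodule.finrank_le (LinearMap.range (dotProductEquiv K N y))
  rw [Module.finrank_self] at range_le
  rw [Module.finrank_fintype_fun_eq_card] at rank_nullity
  lia

theorem mulVec_injective_fromCols_fromCols {t : Matrix N Unit K}
    (hPSx : Function.Injective (fromCols (fromCols P S) (replicateCol Unit x)).mulVec)
    (hyP : y ᵥ* P = 0) (hyS : y ᵥ* S = 0) (hyx : y ⬝ᵥ x = 0) (hyt : y ᵥ* t ≠ 0) :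
    Function.Injective
      (fromCols (fromCols P (replicateCol Unit x)) (fromCols S t)).mulVec := by
  rw [mulVec_injective_fromCols_iff] at hPSx ⊢
  intro c d hcd
  rw [fromCols_mulVec, fromCols_mulVec] at hcd
  have hd : d ∘ Sum.inr = 0 := by
    have hy := congrArg (y ⬝ᵥ ·) hcd
    simp only [dotProduct_add, dotProduct_mulVec, hyP, hyS, zero_dotProduct, dotProduct_zero,
      replicateCol_unit_mulVec, dotProduct_smul, hyx, smul_zero, zero_add] at hy
    rw [dotProduct, Fintype.sum_unique, mul_eq_zero] at hy
    exact funext fun _ => hy.resolve_left fun h => hyt (funext fun _ => h)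
  rw [hd, mulVec_zero, add_zero, add_right_comm] at hcd
  obtain ⟨hPS, hx⟩ := hPSx (Sum.elim (c ∘ Sum.inl) (d ∘ Sum.inl)) (c ∘ Sum.inr) (by
    rwa [fromCols_mulVec, Sum.elim_comp_inl, Sum.elim_comp_inr])
  exact ⟨funext (Sum.rec (fun i => congrFun hPS (.inl i)) (congrFun hx)),
    funext (Sum.rec (fun i => congrFun hPS (.inr i)) (congrFun hd))⟩

variable [DecidableEq N] {χ : AddChar K ℂ} {ρ : Representation ℂ (GL N K) E}

theorem unipotentHom_fromCols_ofAdd_fromRows_zero {X : Matrix N κ K} {Q : Matrix N N K}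
    (hQ : Q * fromCols P X = 0) (C : Matrix ι N K) : ∃ h,
      unipotentHom (fromCols P X) Q hQ (.ofAdd (fromRows C 0)) = unipotent P (C * Q) h := by
  rw [mul_fromCols, ← fromCols_zero, fromCols_ext_iff] at hQ
  refine ⟨by rw [Matrix.mul_assoc, hQ.1, Matrix.mul_zero], Units.ext ?_⟩
  rw [val_unipotentHom_ofAdd, val_unipotent, fromRows_mul, fromCols_mul_fromRows, Matrix.zero_mul,
    Matrix.mul_zero, add_zero]

theorem unipotent_fromCols_fromRows_zero_left {X : Matrix N κ K} {Y : Matrix κ N K}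
    (hYX : Y * X = 0) (h : fromRows 0 Y * fromCols P X = 0) :
    unipotent (fromCols P X) (fromRows 0 Y) h = unipotent X Y hYX :=
  Units.ext (by
    rw [val_unipotent, val_unipotent, fromCols_mul_fromRows, Matrix.mul_zero, zero_add])

-- The vector is averaged to an eigenvector of the group `{1 + [P X] Y}` with dual matrix `[S' t]`;
-- comparison on `{1 + P Y}` forces `S' = S` modulo the columns of `[P X]`.
theorem exists_unipotentEigenspace_fromCols_ne_bot [Finite K] (hχ : χ ≠ 1) {X : Matrix N κ K}
    (hPX : Function.Injective (fromCols P X).mulVec) {v : E}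
    (hv : v ∈ unipotentEigenspace χ ρ P S) {Y₀ : Matrix κ N K} (hYP : Y₀ * P = 0)
    (hYX : Y₀ * X = 0) (hne : ρ (unipotent X Y₀ hYX) v ≠ v) :
    ∃ t : Matrix N κ K, (Y₀ * t).trace ≠ 0 ∧
      unipotentEigenspace χ ρ (fromCols P X) (fromCols S t) ≠ ⊥ := by
  classical
  have := Fintype.ofFinite K
  obtain ⟨L, hL⟩ := exists_mul_eq_one_of_mulVec_injective hPX
  have hQ := one_sub_mul_mul_of_mul_eq_one hL
  have mul_Q {Y : Matrix (ι ⊕ κ) N K} (hY : Y * fromCols P X = 0) :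
      Y * (1 - fromCols P X * L) = Y := by
    rw [Matrix.mul_sub, Matrix.mul_one, ← Matrix.mul_assoc, hY, Matrix.zero_mul, sub_zero]
  set Q := 1 - fromCols P X * L
  let σ := ρ.comp (unipotentHom (fromCols P X) Q hQ)
  let j : Matrix ι N K →ₗ[K] Matrix (ι ⊕ κ) N K := mulLeftLinearMap N K (fromRows 1 0)
  have hj (C) : j C = fromRows C 0 := by simp [j, fromRows_mul]
  have hσ (C) : σ (.ofAdd (j C)) v =
      χ ((traceLinearMap ι K K ∘ₗ mulRightLinearMap ι K (Q * S)) C) • v := by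
    obtain ⟨h, hC⟩ := unipotentHom_fromCols_ofAdd_fromRows_zero hQ C
    rw [hj, MonoidHom.comp_apply, hC, hv, Matrix.mul_assoc]
    rfl
  have hY₀ : fromRows (0 : Matrix ι N K) Y₀ * fromCols P X = 0 := by
    rw [fromRows_mul_fromCols, hYP, hYX, Matrix.zero_mul, Matrix.zero_mul, fromBlocks_zero]
  have hσ₀ : σ (.ofAdd (fromRows 0 Y₀)) = ρ (unipotent X Y₀ hYX) := by
    rw [MonoidHom.comp_apply, unipotentHom_ofAdd_eq_unipotent hQ hY₀ (mul_Q hY₀),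
      unipotent_fromCols_fromRows_zero_left hYX]
  rw [← hσ₀] at hne
  obtain ⟨ℓ, hℓ, hℓ₀⟩ := exists_charSum_apply_ne_zero_of_apply_ne hχ σ hne
  obtain ⟨T, hT⟩ := exists_forall_dual_eq_trace ℓ
  obtain ⟨S', t, rfl⟩ : ∃ S' t, T = fromCols S' t := ⟨_, _, (fromCols_toCols T).symm⟩
  have hS' : S' = Q * S := ext_iff_trace_mul_left.2 fun C => by
    simpa [hT, hj, trace_fromBlocks, Matrix.mul_assoc] using eq_of_charSum_apply_ne_zero hχ hσ hℓ C
  refine ⟨t, ?_, fun hbot => hℓ ((Submodule.eq_bot_iff _).1 hbot _ fun Y hY => ?_)⟩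
  · simpa [hT, trace_fromBlocks] using hℓ₀
  · rw [← unipotentHom_ofAdd_eq_unipotent hQ hY (mul_Q hY), ← MonoidHom.comp_apply, apply_charSum,
      hT, hS', mul_fromCols, mul_fromCols, ← Matrix.mul_assoc, mul_Q hY]

theorem apply_rankOne_eq_self_of_notMem_range [Finite K] (hχ : χ ≠ 1)
    (hmax : ∀ P' S' : Matrix N (ι ⊕ Unit) K, Function.Injective (fromCols P' S').mulVec →
      unipotentEigenspace χ ρ P' S' = ⊥)
    (hPS : Function.Injective (fromCols P S).mulVec) {v : E}
    (hv : v ∈ unipotentEigenspace χ ρ P S) (hyP : y ᵥ* P = 0) (hyS : y ᵥ* S = 0)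
    (hyx : y ⬝ᵥ x = 0) (hx : x ∉ LinearMap.range (fromCols P S).mulVecLin) :
    ρ (rankOne x y (one_add_ne_zero_of_eq_zero hyx)) v = v := by
  have hPSx := mulVec_injective_fromCols_replicateCol hPS hx
  have hYx : replicateRow Unit y * replicateCol Unit x = 0 := by
    ext; exact hyx
  have hYP : replicateRow Unit y * P = 0 := by
    rw [← replicateRow_vecMul, hyP, replicateRow_zero]
  have hPx : Function.Injective (fromCols P (replicateCol Unit x)).mulVec := by
    rw [mulVec_injective_fromCols_iff] at hPSx ⊢
    intro a b hab
    obtain ⟨ha, hb⟩ := hPSx (Sum.elim a 0) b (by simpa [fromCols_mulVec] using hab)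
    exact ⟨funext fun i => congrFun ha (.inl i), hb⟩
  have rankOne_eq : rankOne x y (one_add_ne_zero_of_eq_zero hyx) = unipotent _ _ hYx :=
    Units.ext (by rw [val_rankOne, val_unipotent, vecMulVec_eq Unit])
  by_contra hne
  rw [rankOne_eq] at hne
  obtain ⟨t, ht, hbot⟩ := exists_unipotentEigenspace_fromCols_ne_bot hχ hPx hv hYP hYx hne
  refine hbot (hmax _ _ (mulVec_injective_fromCols_fromCols hPSx hyP hyS hyx fun h => ht ?_))
  rw [← replicateRow_vecMul, h, replicateRow_zero, trace_zero]

theorem apply_rankOne_eq_self [Finite K] (hχ : χ ≠ 1)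
    (hN : 2 * Fintype.card ι + 1 < Fintype.card N)
    (hmax : ∀ P' S' : Matrix N (ι ⊕ Unit) K, Function.Injective (fromCols P' S').mulVec →
      unipotentEigenspace χ ρ P' S' = ⊥)
    (hPS : Function.Injective (fromCols P S).mulVec) {v : E}
    (hv : v ∈ unipotentEigenspace χ ρ P S) (hyP : y ᵥ* P = 0) (hyS : y ᵥ* S = 0)
    (hyx : y ⬝ᵥ x = 0) :
    ρ (rankOne x y (one_add_ne_zero_of_eq_zero hyx)) v = v := by
  by_cases hx : x ∈ LinearMap.range (fromCols P S).mulVecLin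
  swap
  · exact apply_rankOne_eq_self_of_notMem_range hχ hmax hPS hv hyP hyS hyx hx
  obtain ⟨x', hyx', hx'⟩ : ∃ x', y ⬝ᵥ x' = 0 ∧ x' ∉ LinearMap.range (fromCols P S).mulVecLin := by
    refine exists_dotProduct_eq_zero_notMem y ?_
    have hrank : (fromCols P S).rank ≤ Fintype.card (ι ⊕ ι) := rank_le_card_width _
    rw [Fintype.card_sum] at hrank
    exact lt_of_le_of_lt (Nat.succ_le_succ hrank) (by lia)
  have hadd : y ⬝ᵥ (x + x') = 0 := by rw [dotProduct_add, hyx, hyx', add_zero]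
  have hxx' : x + x' ∉ LinearMap.range (fromCols P S).mulVecLin := fun h =>
    hx' ((Submodule.add_mem_iff_right _ hx).1 h)
  have fix := apply_rankOne_eq_self_of_notMem_range hχ hmax hPS hv hyP hyS hadd hxx'
  rwa [rankOne_add_left hyx' (one_add_ne_zero_of_eq_zero hyx), map_mul, Module.End.mul_apply,
    apply_rankOne_eq_self_of_notMem_range hχ hmax hPS hv hyP hyS hyx' hx'] at fix

end MaximalPair

section StabilizerGeneration

variable {K N κ : Type*} [Field K] [Fintype N]

theorem exists_dotProduct_ne_zero_and_ne_zero_of_notMem {p : Submodule K (N → K)} {x x' : N → K}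
    (hx : x ∉ p) (hx' : x' ∉ p) :
    ∃ y : N → K, y ⬝ᵥ x ≠ 0 ∧ y ⬝ᵥ x' ≠ 0 ∧ ∀ z ∈ p, y ⬝ᵥ z = 0 := by
  obtain ⟨y, hyx, hyp⟩ := exists_dotProduct_ne_zero_of_notMem hx
  obtain ⟨y', hyx', hyp'⟩ := exists_dotProduct_ne_zero_of_notMem hx'
  by_cases h : y ⬝ᵥ x' = 0
  · by_cases h' : y' ⬝ᵥ x = 0
    · refine ⟨y + y', ?_, ?_, fun z hz => ?_⟩
      · rwa [add_dotProduct, h', add_zero]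
      · rwa [add_dotProduct, h, zero_add]
      · rw [add_dotProduct, hyp z hz, hyp' z hz, add_zero]
    · exact ⟨y', h', hyx', hyp'⟩
  · exact ⟨y, hyx, h, hyp⟩

variable [DecidableEq N]

/-- The subspace of vectors fixed by `g`. -/
def fixedSpace (g : GL N K) : Submodule K (N → K) :=
  LinearMap.eqLocus (g : Matrix N N K).mulVecLin LinearMap.id

theorem mem_fixedSpace {g : GL N K} {x : N → K} :
    x ∈ fixedSpace g ↔ (g : Matrix N N K) *ᵥ x = x := Iff.rfl

theorem exists_fixedSpace_lt_fixedSpace_rankOne_mul {g : GL N K} (hg : g ≠ 1) :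
    ∃ x y, ∃ h : 1 + y ⬝ᵥ x ≠ 0, (∀ z ∈ fixedSpace g, y ⬝ᵥ z = 0) ∧
      fixedSpace g < fixedSpace (rankOne x y h * g) := by
  obtain ⟨u, hu⟩ : ∃ u, u ∉ fixedSpace g := by
    by_contra! hfix
    exact hg (Units.ext (ext_of_mulVec_single fun j => by
      rw [mem_fixedSpace.1 (hfix _), Units.val_one, one_mulVec]))
  set u' := (g : Matrix N N K) *ᵥ u with hu'
  have hgu : u' ∉ fixedSpace g := fun h => hu <| mem_fixedSpace.2 <| by
    simpa [hu', mulVec_mulVec] using congrArg (((g⁻¹ : GL N K) : Matrix N N K) *ᵥ ·)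
      (mem_fixedSpace.1 h)
  obtain ⟨y, hyu, hyu', hy⟩ :
      ∃ y, y ⬝ᵥ u ≠ 0 ∧ y ⬝ᵥ u' = 1 ∧ ∀ z ∈ fixedSpace g, y ⬝ᵥ z = 0 := by
    obtain ⟨y, hyu, hyu', hy⟩ := exists_dotProduct_ne_zero_and_ne_zero_of_notMem hu hgu
    refine ⟨(y ⬝ᵥ u')⁻¹ • y, ?_, ?_, fun z hz => ?_⟩ <;> rw [smul_dotProduct, smul_eq_mul]
    · exact mul_ne_zero (inv_ne_zero hyu') hyu
    · exact inv_mul_cancel₀ hyu'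
    · rw [hy z hz, mul_zero]
  have h : 1 + y ⬝ᵥ (u - u') ≠ 0 := by rwa [dotProduct_sub, hyu', add_sub_cancel]
  have apply (z) : ((rankOne (u - u') y h * g : GL N K) : Matrix N N K) *ᵥ z =
      (g : Matrix N N K) *ᵥ z + (y ⬝ᵥ ((g : Matrix N N K) *ᵥ z)) • (u - u') := by
    rw [Units.val_mul, ← mulVec_mulVec, rankOne_mulVec]
  refine ⟨u - u', y, h, hy, lt_of_le_of_ne (fun z hz => ?_) fun heq => hu ?_⟩
  · rw [mem_fixedSpace, apply, mem_fixedSpace.1 hz, hy z hz, zero_smul, add_zero]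
  · rw [heq, mem_fixedSpace, apply, ← hu', hyu', one_smul, add_sub_cancel]

theorem mem_closure_rankOne_of_mul_eq {A : Matrix N κ K} {g : GL N K}
    (hg : (g : Matrix N N K) * A = A) :
    g ∈ Subgroup.closure {s : GL N K | ∃ x y h, y ᵥ* A = 0 ∧ s = rankOne x y h} := by
  have cols_mem (j : κ) : A.col j ∈ fixedSpace g := mem_fixedSpace.2 congr(($hg).col j)
  induction hp : fixedSpace g using WellFoundedGT.induction generalizing g with
  | ind p ih =>
    subst hp
    by_cases hg1 : g = 1
    · exact hg1 ▸ one_mem _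
    obtain ⟨x, y, h, hy, hlt⟩ := exists_fixedSpace_lt_fixedSpace_rankOne_mul hg1
    have hs : rankOne x y h ∈
        Subgroup.closure {s : GL N K | ∃ x y h, y ᵥ* A = 0 ∧ s = rankOne x y h} :=
      Subgroup.subset_closure ⟨x, y, h, funext fun j => hy _ (cols_mem j), rfl⟩
    have hsA : ((rankOne x y h * g : GL N K) : Matrix N N K) * A = A :=
      ext_col fun j => hlt.le (cols_mem j)
    exact (Subgroup.mul_mem_cancel_left _ hs).1
      (ih _ hlt hsA (fun j => hlt.le (cols_mem j)) rfl)

end StabilizerGeneration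

section Dilations

variable {K N κ E : Type*} [Field K] [Fintype N] [AddCommGroup E] [Module ℂ E]
  {x x₀ y y₀ : N → K}

theorem one_add_dotProduct_sub_one_smul (h : y ⬝ᵥ x = 1) (c : K) :
    1 + y ⬝ᵥ ((c - 1) • x) = c := by
  rw [dotProduct_smul, h, smul_eq_mul, mul_one, add_sub_cancel]

variable [DecidableEq N]

theorem rankOne_add_right {e : N → K} (he : e ⬝ᵥ x = 0) (h : 1 + y ⬝ᵥ x ≠ 0)
    (hadd : 1 + (y + (1 + y ⬝ᵥ x) • e) ⬝ᵥ x ≠ 0) :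
    rankOne x (y + (1 + y ⬝ᵥ x) • e) hadd =
      rankOne x y h * rankOne x e (one_add_ne_zero_of_eq_zero he) := by
  apply Units.ext
  rw [Units.val_mul, val_rankOne, val_rankOne, val_rankOne, add_mul, mul_add, mul_add,
    vecMulVec_mul_vecMulVec, vecMulVec_add, add_smul, one_smul, vecMulVec_add]
  simp [add_assoc, add_comm, add_left_comm]

theorem rankOne_eq_rankOne {x' y' : N → K} (hxy : vecMulVec x y = vecMulVec x' y')
    (h : 1 + y ⬝ᵥ x ≠ 0) (h' : 1 + y' ⬝ᵥ x' ≠ 0) : rankOne x y h = rankOne x' y' h' :=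
  Units.ext (by rw [val_rankOne, val_rankOne, hxy])

theorem apply_rankOne_eq_apply_rankOne_of_ne_zero {A : Matrix N κ K}
    {ρ : Representation ℂ (GL N K) E} {v : E}
    (hv : ∀ x y (hyx : y ⬝ᵥ x = 0), y ᵥ* A = 0 →
      ρ (rankOne x y (one_add_ne_zero_of_eq_zero hyx)) v = v)
    (hy : y ᵥ* A = 0) (hy₀ : y₀ ᵥ* A = 0) (h : 1 + y ⬝ᵥ x ≠ 0) (h₀ : 1 + y₀ ⬝ᵥ x₀ ≠ 0)
    (heq : y ⬝ᵥ x = y₀ ⬝ᵥ x₀) (hne : y ⬝ᵥ x₀ ≠ 0) :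
    ρ (rankOne x y h) v = ρ (rankOne x₀ y₀ h₀) v := by
  set t := (y ⬝ᵥ x) / (y ⬝ᵥ x₀)
  have htx₀ : y ⬝ᵥ (t • x₀) = y ⬝ᵥ x := by rw [dotProduct_smul, smul_eq_mul, div_mul_cancel₀ _ hne]
  have hd : y ⬝ᵥ (x - t • x₀) = 0 := by rw [dotProduct_sub, htx₀, sub_self]
  set e := (1 + y₀ ⬝ᵥ x₀)⁻¹ • (t • y - y₀) with he
  have hty : y₀ + (1 + y₀ ⬝ᵥ x₀) • e = t • y := by
    rw [he, smul_inv_smul₀ h₀, add_sub_cancel]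
  have hex₀ : e ⬝ᵥ x₀ = 0 := by
    rw [he, smul_dotProduct, sub_dotProduct, smul_dotProduct, ← dotProduct_smul, htx₀, heq,
      sub_self, smul_zero]
  have heA : e ᵥ* A = 0 := by
    rw [he, smul_vecMul, sub_vecMul, smul_vecMul, hy, hy₀, smul_zero, sub_zero, smul_zero]
  calc ρ (rankOne x y h) v
      = ρ (rankOne (t • x₀ + (x - t • x₀)) y (by rwa [add_sub_cancel])) v :=
        congrArg (ρ · v) (rankOne_eq_rankOne (by rw [add_sub_cancel]) _ _)
    _ = ρ (rankOne (t • x₀) y (htx₀ ▸ h)) v := by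
        rw [rankOne_add_left hd (htx₀ ▸ h), map_mul, Module.End.mul_apply, hv _ _ hd hy]
    _ = ρ (rankOne x₀ (y₀ + (1 + y₀ ⬝ᵥ x₀) • e) (by
          rwa [hty, smul_dotProduct, ← dotProduct_smul, htx₀])) v :=
        congrArg (ρ · v) (rankOne_eq_rankOne (by rw [hty, vecMulVec_smul, smul_vecMulVec]) _ _)
    _ = ρ (rankOne x₀ y₀ h₀) v := by
        rw [rankOne_add_right hex₀ h₀, map_mul, Module.End.mul_apply, hv _ _ hex₀ heA]

theorem apply_rankOne_eq_apply_rankOne {A : Matrix N κ K}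
    {ρ : Representation ℂ (GL N K) E} {v : E}
    (hv : ∀ x y (hyx : y ⬝ᵥ x = 0), y ᵥ* A = 0 →
      ρ (rankOne x y (one_add_ne_zero_of_eq_zero hyx)) v = v)
    (hy : y ᵥ* A = 0) (hy₀ : y₀ ᵥ* A = 0) (h : 1 + y ⬝ᵥ x ≠ 0) (h₀ : 1 + y₀ ⬝ᵥ x₀ ≠ 0)
    (heq : y ⬝ᵥ x = y₀ ⬝ᵥ x₀) :
    ρ (rankOne x y h) v = ρ (rankOne x₀ y₀ h₀) v := by
  by_cases hyx₀ : y ⬝ᵥ x₀ = 0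
  swap
  · exact apply_rankOne_eq_apply_rankOne_of_ne_zero hv hy hy₀ h h₀ heq hyx₀
  by_cases hy₀x : y₀ ⬝ᵥ x = 0
  swap
  · exact (apply_rankOne_eq_apply_rankOne_of_ne_zero hv hy₀ hy h₀ h heq.symm hy₀x).symm
  by_cases hyx : y ⬝ᵥ x = 0
  · rw [hv x y hyx hy, hv x₀ y₀ (heq ▸ hyx) hy₀]
  have hadd : y ⬝ᵥ (x + x₀) = y ⬝ᵥ x := by rw [dotProduct_add, hyx₀, add_zero]
  calc ρ (rankOne x y h) v = ρ (rankOne (x + x₀) y (hadd ▸ h)) v := by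
        rw [rankOne_add_left hyx₀ h, map_mul, Module.End.mul_apply, hv x₀ y hyx₀ hy]
    _ = ρ (rankOne x₀ y₀ h₀) v := by
        refine (apply_rankOne_eq_apply_rankOne_of_ne_zero hv hy₀ hy h₀ (hadd ▸ h)
          (hadd.trans heq).symm ?_).symm
        rwa [dotProduct_add, hy₀x, zero_add, ← heq]

/-- The homomorphism sending `c` to the dilation `1 + (c - 1) x yᵀ`, where `yᵀ x = 1`. -/
def dilationHom (x y : N → K) (h : y ⬝ᵥ x = 1) : Kˣ →* GL N K where
  toFun c := rankOne (((c : K) - 1) • x) y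
    ((one_add_dotProduct_sub_one_smul h (c : K)).symm ▸ c.ne_zero)
  map_one' := Units.ext (by simp [val_rankOne])
  map_mul' c d := Units.ext (by
    have idem : vecMulVec x y * vecMulVec x y = vecMulVec x y := by
      rw [vecMulVec_mul_vecMulVec, h, one_smul]
    simp only [Units.val_mul, val_rankOne, smul_vecMulVec, Matrix.add_mul, Matrix.mul_add,
      Matrix.one_mul, Matrix.mul_one, Matrix.smul_mul, Matrix.mul_smul, idem]
    module)

theorem dilationHom_apply (h : y ⬝ᵥ x = 1) (c : Kˣ) : dilationHom x y h c =
    rankOne (((c : K) - 1) • x) y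
      ((one_add_dotProduct_sub_one_smul h (c : K)).symm ▸ c.ne_zero) := rfl

theorem rankOne_mul_eq_self {A : Matrix N κ K} (hy : y ᵥ* A = 0) (h : 1 + y ⬝ᵥ x ≠ 0) :
    (rankOne x y h : Matrix N N K) * A = A := by
  rw [val_rankOne, Matrix.add_mul, Matrix.one_mul, vecMulVec_mul, hy]
  exact add_eq_left.2 (ext fun _ _ => mul_zero _)

end Dilations

theorem exists_monoidHom_of_forall_exists_smul {G E : Type*} [Group G] [AddCommGroup E] [Module ℂ E]
    (τ : Representation ℂ G E) {w : E} (hw : w ≠ 0) (h : ∀ g, ∃ c : ℂ, τ g w = c • w) :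
    ∃ β : G →* ℂˣ, ∀ g, τ g w = (β g : ℂ) • w := by
  choose β hβ using h
  have unique {c d : ℂ} (hcd : c • w = d • w) : c = d := smul_left_injective ℂ hw hcd
  let β' : G →* ℂ :=
    { toFun := β
      map_one' := unique (by rw [← hβ, map_one, Module.End.one_apply, one_smul])
      map_mul' g g' := unique (by
        rw [← hβ, map_mul, Module.End.mul_apply, hβ, map_smul, hβ, smul_smul, mul_comm]) }
  exact ⟨β'.toHomUnits, hβ⟩

theorem exists_monoidHom_mem_of_isCyclic {G E : Type*} [Group G] [Finite G] [IsCyclic G]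
    [AddCommGroup E] [Module ℂ E] [FiniteDimensional ℂ E] (τ : Representation ℂ G E)
    {p : Submodule ℂ E}
    (hp : p ≠ ⊥) (hτ : ∀ g, ∀ v ∈ p, τ g v ∈ p) :
    ∃ β : G →* ℂˣ, ∃ w ∈ p, w ≠ 0 ∧ ∀ g, τ g w = (β g : ℂ) • w := by
  obtain ⟨g₀, hg₀⟩ := IsCyclic.exists_monoid_generator (α := G)
  have := Submodule.nontrivial_iff_ne_bot.2 hp
  obtain ⟨μ, hμ⟩ := Module.End.exists_eigenvalue ((τ g₀).restrict (hτ g₀))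
  obtain ⟨w, hw⟩ := hμ.exists_hasEigenvector
  have hg₀w : τ g₀ w = μ • (w : E) := congrArg Subtype.val hw.apply_eq_smul
  have hw0 : (w : E) ≠ 0 := fun h => hw.2 (Subtype.ext h)
  obtain ⟨β, hβ⟩ := exists_monoidHom_of_forall_exists_smul τ hw0 fun g => by
    obtain ⟨n, hn : g₀ ^ n = g⟩ := hg₀ g
    refine ⟨μ ^ n, hn ▸ ?_⟩
    clear hn
    induction n with
    | zero => simp
    | succ n ih =>
      rw [pow_succ', map_mul, Module.End.mul_apply, ih, map_smul, hg₀w, smul_smul, pow_succ]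
  exact ⟨β, w, w.2, hw0, hβ⟩

theorem exists_dotProduct_eq_one_of_card_lt {K N κ : Type*} [Field K] [Fintype N] [Fintype κ]
    (A : Matrix N κ K) (h : Fintype.card κ < Fintype.card N) :
    ∃ x y : N → K, y ⬝ᵥ x = 1 ∧ y ᵥ* A = 0 := by
  have hA : (LinearMap.range A.mulVecLin) ≠ ⊤ := fun htop => by
    have := A.rank_le_card_width
    rw [Matrix.rank, htop, finrank_top, Module.finrank_fintype_fun_eq_card] at this
    omega
  obtain ⟨x, hx⟩ := SetLike.exists_not_mem_of_ne_top _ hA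
  obtain ⟨y, hyx, hyA⟩ := exists_dotProduct_ne_zero_of_notMem hx
  refine ⟨(y ⬝ᵥ x)⁻¹ • x, y, ?_, vecMul_eq_zero_iff_forall_range.2 hyA⟩
  rw [dotProduct_smul, smul_eq_mul, inv_mul_cancel₀ hyx]

theorem exists_twistRep_fixed_of_transvections {K κ : Type} [Field K] [Finite K] [Fintype κ] {m : ℕ}
    {E : Type} [AddCommGroup E] [Module ℂ E] [FiniteDimensional ℂ E]
    {ρ : Representation ℂ (GL (Fin m) K) E} {A : Matrix (Fin m) κ K} (hκ : Fintype.card κ < m)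
    {p : Submodule ℂ E} (hp : p ≠ ⊥)
    (hstab : ∀ g : GL (Fin m) K, (g : Matrix (Fin m) (Fin m) K) * A = A → ∀ v ∈ p, ρ g v ∈ p)
    (htrans : ∀ v ∈ p, ∀ x y (hyx : y ⬝ᵥ x = 0), y ᵥ* A = 0 →
      ρ (rankOne x y (one_add_ne_zero_of_eq_zero hyx)) v = v) :
    ∃ α : Kˣ →* ℂˣ, ∃ w ∈ p, w ≠ 0 ∧ ∀ g : GL (Fin m) K,
      (g : Matrix (Fin m) (Fin m) K) * A = A → twistRep α ρ g w = w := by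
  obtain ⟨x₀, y₀, hyx₀, hy₀A⟩ := exists_dotProduct_eq_one_of_card_lt A (by simpa using hκ)
  obtain ⟨β, w, hwp, hw0, hβ⟩ := exists_monoidHom_mem_of_isCyclic
    (ρ.comp (dilationHom x₀ y₀ hyx₀)) hp fun c => hstab _ <| by
      rw [dilationHom_apply]; exact rankOne_mul_eq_self hy₀A _
  refine ⟨β⁻¹, w, hwp, hw0, fun g hg => ?_⟩
  have hmem := mem_closure_rankOne_of_mul_eq hg
  clear hg
  induction hmem using Subgroup.closure_induction with
  | mem g hg =>
    obtain ⟨x, y, h, hyA, rfl⟩ := hg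
    have hdet : detHom m (rankOne x y h) = Units.mk0 _ h :=
      Units.ext (det_one_add_vecMulVec x y)
    have hρ : ρ (rankOne x y h) w = (β (Units.mk0 _ h) : ℂ) • w := by
      rw [← hβ, MonoidHom.comp_apply, dilationHom_apply]
      exact apply_rankOne_eq_apply_rankOne (htrans w hwp) hyA hy₀A _ _
        (add_left_cancel (one_add_dotProduct_sub_one_smul hyx₀ _).symm)
    change (β⁻¹ (detHom m (rankOne x y h)) : ℂ) • ρ (rankOne x y h) w = w
    rw [hdet, hρ, smul_smul, MonoidHom.inv_apply, Units.inv_mul, one_smul]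
  | one => rw [map_one, Module.End.one_apply]
  | mul g g' _ _ ih ih' => rw [map_mul, Module.End.mul_apply, ih', ih]
  | inv g _ ih =>
    nth_rw 1 [← ih]
    exact (twistRep β⁻¹ ρ).inv_self_apply g w

section MaximalPairExistence

variable {K N E : Type*} [Field K] [Fintype N] [AddCommGroup E] [Module ℂ E]

theorem two_mul_card_le_of_mulVec_injective_fromCols {ι : Type*} [Fintype ι] {P S : Matrix N ι K}
    (hPS : Function.Injective (fromCols P S).mulVec) :
    2 * Fintype.card ι ≤ Fintype.card N := by
  have := LinearMap.finrank_le_finrank_of_injective (f := (fromCols P S).mulVecLin) hPS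
  rw [Module.finrank_fintype_fun_eq_card, Module.finrank_fintype_fun_eq_card,
    Fintype.card_sum] at this
  lia

variable [DecidableEq N]

theorem unipotentEigenspace_eq_top_of_isEmpty {ι : Type*} [Fintype ι] [IsEmpty ι]
    (χ : AddChar K ℂ) (ρ : Representation ℂ (GL N K) E) (P S : Matrix N ι K) :
    unipotentEigenspace χ ρ P S = ⊤ := by
  refine Submodule.eq_top_iff'.2 fun v Y h => ?_
  have hone : unipotent P Y h = 1 := Units.ext (by ext; simp [mul_apply])
  rw [hone, map_one, Module.End.one_apply, trace_eq_zero_of_isEmpty, AddChar.map_zero_eq_one,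
    one_smul]

theorem exists_maximal_unipotentEigenspace_ne_bot [Nontrivial E] (χ : AddChar K ℂ)
    (ρ : Representation ℂ (GL N K) E) :
    ∃ (ι : Type) (_ : Fintype ι) (P S : Matrix N ι K), Function.Injective (fromCols P S).mulVec ∧
      unipotentEigenspace χ ρ P S ≠ ⊥ ∧ ∀ P' S' : Matrix N (ι ⊕ Unit) K,
        Function.Injective (fromCols P' S').mulVec → unipotentEigenspace χ ρ P' S' = ⊥ := by
  by_contra! extend
  have unbounded (s : ℕ) : ∃ (ι : Type) (_ : Fintype ι) (P S : Matrix N ι K), Fintype.card ι = s ∧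
      Function.Injective (fromCols P S).mulVec ∧ unipotentEigenspace χ ρ P S ≠ ⊥ := by
    induction s with
    | zero =>
      refine ⟨Empty, inferInstance, 0, 0, Fintype.card_eq_zero,
        Function.injective_of_subsingleton _, ?_⟩
      rw [unipotentEigenspace_eq_top_of_isEmpty]
      exact top_ne_bot
    | succ s ih =>
      obtain ⟨ι, _, P, S, rfl, hPS, hne⟩ := ih
      obtain ⟨P', S', hPS', hne'⟩ := extend ι inferInstance P S hPS hne
      exact ⟨ι ⊕ Unit, inferInstance, P', S', by simp, hPS', hne'⟩
  obtain ⟨ι, _, P, S, hcard, hPS, -⟩ := unbounded (Fintype.card N + 1)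
  have := two_mul_card_le_of_mulVec_injective_fromCols hPS
  lia

end MaximalPairExistence

section Occurs

variable {K E : Type} [Field K] [Finite K] [AddCommGroup E] [Module ℂ E] {m : ℕ}

theorem occurs_permRep_of_fixed {κ : Type*} [Fintype κ] (τ : Representation ℂ (GL (Fin m) K) E)
    (A : Matrix (Fin m) κ K) {w : E} (hw : w ≠ 0)
    (hfix : ∀ g : GL (Fin m) K, (g : Matrix (Fin m) (Fin m) K) * A = A → τ g w = w) :
    Occurs τ (permRep m (Fintype.card κ)) := by
  classical
  have := Fintype.ofFinite (GL (Fin m) K)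
  let e := Fintype.equivFin κ
  obtain ⟨ℓ, hℓ⟩ : ∃ ℓ : Module.Dual ℂ E, ℓ w ≠ 0 := by
    by_contra! h
    exact hw ((Module.forall_dual_apply_eq_zero_iff ℂ w).1 h)
  let coset (T : Matrix (Fin m) (Fin (Fintype.card κ)) K) : Finset (GL (Fin m) K) :=
    {g | (g : Matrix (Fin m) (Fin m) K) * A = T.submatrix id e}
  let φ : E →ₗ[ℂ] (Matrix (Fin m) (Fin (Fintype.card κ)) K → ℂ) :=
    LinearMap.pi fun T => ∑ g ∈ coset T, ℓ ∘ₗ τ g⁻¹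
  have hφ (u T) : φ u T = ∑ g ∈ coset T, ℓ (τ g⁻¹ u) := by simp [φ]
  refine ⟨φ, fun h => ?_, fun h => LinearMap.ext fun u => funext fun T => ?_⟩
  · have hstab : coset (A.submatrix id e.symm) =
        ({g | (g : Matrix (Fin m) (Fin m) K) * A = A} : Finset (GL (Fin m) K)) := by
      simp [coset]
    have hconst : ∀ g ∈ coset (A.submatrix id e.symm), ℓ (τ g⁻¹ w) = ℓ w := fun g hg => by
      rw [hstab, Finset.mem_filter] at hg
      nth_rw 1 [← hfix g hg.2]
      rw [τ.inv_self_apply]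
    have hzero := hφ w (A.submatrix id e.symm)
    rw [Finset.sum_congr rfl hconst, Finset.sum_const, h, LinearMap.zero_apply, Pi.zero_apply,
      eq_comm, smul_eq_zero_iff_left hℓ, Finset.card_eq_zero, hstab] at hzero
    exact Finset.eq_empty_iff_forall_notMem.1 hzero 1 (by simp)
  · change φ (τ h u) T = φ u (((h⁻¹ : GL (Fin m) K) : Matrix (Fin m) (Fin m) K) * T)
    rw [hφ, hφ]
    refine Finset.sum_equiv (Equiv.mulLeft h⁻¹) (fun g => ?_) fun g _ => ?_
    · simp only [coset, Finset.mem_filter, Finset.mem_univ, true_and, Equiv.coe_mulLeft,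
        Units.val_mul, Matrix.mul_assoc, submatrix_mul _ _ _ _ _ Function.bijective_id,
        submatrix_id_id]
      exact (Matrix.mul_right_inj_of_invertible _).symm
    · rw [Equiv.coe_mulLeft, _root_.mul_inv_rev, inv_inv, map_mul, Module.End.mul_apply]

end Occurs

section URankBound

variable {F : Type} [Field F] [Fintype F] [DecidableEq F] {m : ℕ}

theorem exists_occurs_twistRep_permRep {E : Type} [AddCommGroup E] [Module ℂ E]
    [FiniteDimensional ℂ E] [Nontrivial E] {χ : AddChar F ℂ} (hχ : χ ≠ 1)
    {ρ : Representation ℂ (GL (Fin m) F) E} {k : ℕ} (hkm : 2 * k + 1 < m)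
    (hρ : ∀ T, CharAppears χ ρ (show m / 2 + (m - m / 2) ≤ m by omega) T → T.rank ≤ k) :
    ∃ t ≤ 2 * k, ∃ α : Fˣ →* ℂˣ, Occurs (twistRep α ρ) (permRep m t) := by
  obtain ⟨ι, _, P, S, hPS, hne, hmax⟩ := exists_maximal_unipotentEigenspace_ne_bot χ ρ
  have hιm := two_mul_card_le_of_mulVec_injective_fromCols hPS
  rw [Fintype.card_fin] at hιm
  obtain ⟨v, hv, hv0⟩ := Submodule.exists_mem_ne_zero_of_ne_bot hne
  have hιk : Fintype.card ι ≤ k :=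
    card_le_of_mem_unipotentEigenspace hχ _ hρ (by lia) (by lia) hPS hv0 hv
  obtain ⟨α, w, -, hw0, hfix⟩ := exists_twistRep_fixed_of_transvections (A := fromCols P S)
    (by rw [Fintype.card_sum]; lia) hne
    (fun g hg u hu => by
      rw [mul_fromCols, fromCols_ext_iff] at hg
      simpa only [hg.1, hg.2] using apply_mem_unipotentEigenspace hu g)
    (fun u hu x y hyx hy => by
      rw [vecMul_fromCols, ← Sum.elim_zero_zero, Sum.elim_eq_iff] at hy
      exact apply_rankOne_eq_self hχ (by rw [Fintype.card_fin]; lia) hmax hPS hu hy.1 hy.2 hyx)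
  exact ⟨_, by rw [Fintype.card_sum]; lia, α, occurs_permRep_of_fixed _ _ hw0 hfix⟩

end URankBound

section MinimalIntertwiner

variable {K E : Type} [Field K] [AddCommGroup E] [Module ℂ E] {m r s : ℕ}
  {τ : Representation ℂ (GL (Fin m) K) E}

theorem apply_intertwiner {φ : E →ₗ[ℂ] (Matrix (Fin m) (Fin s) K → ℂ)}
    (hφ : ∀ g, φ ∘ₗ τ g = permRep m s g ∘ₗ φ) (g : GL (Fin m) K) (u : E)
    (T : Matrix (Fin m) (Fin s) K) :
    φ (τ g u) T = φ u (((g⁻¹ : GL (Fin m) K) : Matrix (Fin m) (Fin m) K) * T) :=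
  congrFun (LinearMap.congr_fun (hφ g) u) T

theorem exists_mul_eq_of_mulVec_eq_zero {N : Type*} {T : Matrix N (Fin (r + 1)) K}
    {z : Fin (r + 1) → K} (hz : z ≠ 0) (hT : T *ᵥ z = 0) :
    ∃ (T' : Matrix N (Fin r) K) (A : Matrix (Fin r) (Fin (r + 1)) K), T' * A = T := by
  obtain ⟨j, hj⟩ := Function.ne_iff.1 hz
  let Q : Matrix (Fin (r + 1)) (Fin (r + 1)) K := 1 - vecMulVec z (Pi.single j (z j)⁻¹)
  have hTQ : T * Q = T := by
    rw [Matrix.mul_sub, Matrix.mul_one, mul_vecMulVec, hT, zero_vecMulVec, sub_zero]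
  have hQj (l) : Q j l = 0 := by
    obtain rfl | hl := eq_or_ne l j
    · simp [Q, vecMulVec_apply, mul_inv_cancel₀ hj]
    · simp [Q, vecMulVec_apply, hl, one_apply_ne hl.symm]
  refine ⟨T.submatrix id j.succAbove, Q.submatrix j.succAbove id, ?_⟩
  conv_rhs => rw [← hTQ]
  ext i l
  simp only [mul_apply, submatrix_apply, id_eq, Fin.sum_univ_succAbove _ j, hQj, mul_zero,
    zero_add]

theorem intertwiner_apply_mul_eq_zero (hr : ¬ Occurs τ (permRep m r))
    {φ : E →ₗ[ℂ] (Matrix (Fin m) (Fin s) K → ℂ)} (hφ : ∀ g, φ ∘ₗ τ g = permRep m s g ∘ₗ φ)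
    (u : E) (T : Matrix (Fin m) (Fin r) K) (A : Matrix (Fin r) (Fin s) K) :
    φ u (T * A) = 0 := by
  let ψ : E →ₗ[ℂ] (Matrix (Fin m) (Fin r) K → ℂ) := LinearMap.funLeft ℂ ℂ (· * A) ∘ₗ φ
  have hψ : ψ = 0 := by
    by_contra hne
    refine hr ⟨ψ, hne, fun g => LinearMap.ext fun u => funext fun T => ?_⟩
    change φ (τ g u) (T * A) = φ u (_ * T * A)
    rw [apply_intertwiner hφ, Matrix.mul_assoc]
  exact congrFun (LinearMap.congr_fun hψ u) T

theorem intertwiner_apply_eq_zero_of_mulVec_eq_zero (hr : ¬ Occurs τ (permRep m r))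
    {φ : E →ₗ[ℂ] (Matrix (Fin m) (Fin (r + 1)) K → ℂ)}
    (hφ : ∀ g, φ ∘ₗ τ g = permRep m (r + 1) g ∘ₗ φ) (u : E) {T : Matrix (Fin m) (Fin (r + 1)) K}
    {z : Fin (r + 1) → K} (hz : z ≠ 0) (hT : T *ᵥ z = 0) : φ u T = 0 := by
  obtain ⟨T', A, rfl⟩ := exists_mul_eq_of_mulVec_eq_zero hz hT
  exact intertwiner_apply_mul_eq_zero hr hφ u T' A

theorem mulVec_injective_of_intertwiner_apply_ne_zero (hr : ¬ Occurs τ (permRep m r))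
    {φ : E →ₗ[ℂ] (Matrix (Fin m) (Fin (r + 1)) K → ℂ)}
    (hφ : ∀ g, φ ∘ₗ τ g = permRep m (r + 1) g ∘ₗ φ) {u : E} {T : Matrix (Fin m) (Fin (r + 1)) K}
    (hT : φ u T ≠ 0) : Function.Injective T.mulVec := by
  refine (injective_iff_map_eq_zero T.mulVecLin).2 fun z hz => ?_
  by_contra hz0
  exact hT (intertwiner_apply_eq_zero_of_mulVec_eq_zero hr hφ u hz0 hz)

theorem exists_stabilizer_fixed_of_intertwiner_ne_zero [Finite K]
    {φ : E →ₗ[ℂ] (Matrix (Fin m) (Fin s) K → ℂ)} (hφ0 : φ ≠ 0)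
    (hφ : ∀ g, φ ∘ₗ τ g = permRep m s g ∘ₗ φ) :
    ∃ u S, φ u S ≠ 0 ∧ (∀ T, ‖φ u T‖ ≤ ‖φ u S‖) ∧
      ∀ g : GL (Fin m) K, (g : Matrix (Fin m) (Fin m) K) * S = S → τ g u = u := by
  classical
  have := Fintype.ofFinite (GL (Fin m) K)
  obtain ⟨u, hu⟩ := DFunLike.ne_iff.1 hφ0
  obtain ⟨T, hT⟩ := Function.ne_iff.1 hu
  obtain ⟨S, hS⟩ := Finite.exists_max fun T => ‖φ u T‖
  have hS0 : φ u S ≠ 0 := norm_pos_iff.1 ((norm_pos_iff.2 hT).trans_le (hS T))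
  let H : Finset (GL (Fin m) K) := {g | (g : Matrix (Fin m) (Fin m) K) * S = S}
  have hH {g} : g ∈ H ↔ (g : Matrix (Fin m) (Fin m) K) * S = S := by simp [H]
  have hφH (T) : φ (∑ g ∈ H, τ g u) T =
      ∑ g ∈ H, φ u (((g⁻¹ : GL (Fin m) K) : Matrix (Fin m) (Fin m) K) * T) := by
    rw [map_sum, Finset.sum_apply]
    exact Finset.sum_congr rfl fun g _ => apply_intertwiner hφ g u T
  have hφS : φ (∑ g ∈ H, τ g u) S = H.card • φ u S := by
    rw [hφH, ← Finset.sum_const]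
    refine Finset.sum_congr rfl fun g hg => ?_
    nth_rw 1 [← hH.1 hg]
    rw [← Matrix.mul_assoc, Units.inv_mul, Matrix.one_mul]
  have hcard : H.card ≠ 0 := Finset.card_ne_zero_of_mem (a := 1) (hH.2 (Matrix.one_mul S))
  refine ⟨∑ g ∈ H, τ g u, S, ?_, fun T => ?_, fun h hh => ?_⟩
  · rw [hφS]
    exact smul_ne_zero hcard hS0
  · rw [hφS, hφH, nsmul_eq_mul, norm_mul, Complex.norm_natCast, ← nsmul_eq_mul, ← Finset.sum_const]
    exact norm_sum_le_of_le _ fun g _ => hS _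
  · rw [map_sum]
    refine Finset.sum_equiv (Equiv.mulLeft h) (fun g => ?_) fun g _ => ?_
    · rw [hH, hH, Equiv.coe_mulLeft, Units.val_mul, Matrix.mul_assoc]
      nth_rw 4 [← hh]
      exact (Matrix.mul_right_inj_of_invertible _).symm
    · rw [Equiv.coe_mulLeft, map_mul, Module.End.mul_apply]

variable [Fintype K]

theorem comp_intertwiner_sum_add_vecMulVec {φ : E →ₗ[ℂ] (Matrix (Fin m) (Fin s) K → ℂ)}
    (hφ : ∀ g, φ ∘ₗ τ g = permRep m s g ∘ₗ φ) (z : Fin s → K) (g : GL (Fin m) K) :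
    (∑ w, LinearMap.funLeft ℂ ℂ (· + vecMulVec w z) ∘ₗ φ) ∘ₗ τ g =
      permRep m s g ∘ₗ ∑ w, LinearMap.funLeft ℂ ℂ (· + vecMulVec w z) ∘ₗ φ := by
  refine LinearMap.ext fun u => funext fun T => ?_
  have hbij : Function.Bijective ((g⁻¹ : GL (Fin m) K) : Matrix (Fin m) (Fin m) K).mulVec :=
    Finite.injective_iff_bijective.1 (mulVec_injective_of_isUnit (g⁻¹).isUnit)
  have hsum (v : E) (X : Matrix (Fin m) (Fin s) K) :
      (∑ w, LinearMap.funLeft ℂ ℂ (· + vecMulVec w z) ∘ₗ φ) v X =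
        ∑ w, φ v (X + vecMulVec w z) := by simp
  change (∑ w, LinearMap.funLeft ℂ ℂ (· + vecMulVec w z) ∘ₗ φ) (τ g u) T =
    (∑ w, LinearMap.funLeft ℂ ℂ (· + vecMulVec w z) ∘ₗ φ) u
      (((g⁻¹ : GL (Fin m) K) : Matrix (Fin m) (Fin m) K) * T)
  rw [hsum, hsum]
  refine Fintype.sum_bijective _ hbij _ _ fun w => ?_
  rw [apply_intertwiner hφ, Matrix.mul_add, mul_vecMulVec]

theorem sum_intertwiner_apply_add_vecMulVec (hr : ¬ Occurs τ (permRep m r))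
    {φ : E →ₗ[ℂ] (Matrix (Fin m) (Fin (r + 1)) K → ℂ)}
    (hφ : ∀ g, φ ∘ₗ τ g = permRep m (r + 1) g ∘ₗ φ) (u : E) (T : Matrix (Fin m) (Fin (r + 1)) K)
    {z : Fin (r + 1) → K} (hz : z ≠ 0) : ∑ w, φ u (T + vecMulVec w z) = 0 := by
  obtain ⟨j, hj⟩ := Function.ne_iff.1 hz
  let d : Fin (r + 1) → K := Pi.single j (z j)⁻¹
  have hd : d ≠ 0 := by simpa [d] using hj
  have hzd : z ⬝ᵥ d = 1 := by rw [dotProduct_single, mul_inv_cancel₀ hj]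
  have hTd : (T + vecMulVec (-(T *ᵥ d)) z) *ᵥ d = 0 := by
    rw [add_mulVec, vecMulVec_mulVec, hzd, MulOpposite.op_one, one_smul, add_neg_cancel]
  calc ∑ w, φ u (T + vecMulVec w z)
      = ∑ w, φ u (T + vecMulVec (-(T *ᵥ d)) z + vecMulVec w z) := by
        refine (Fintype.sum_equiv (Equiv.addLeft (-(T *ᵥ d))) _ _ fun w => ?_).symm
        rw [Equiv.coe_addLeft, add_vecMulVec, add_assoc]
    _ = 0 := by
        simpa using intertwiner_apply_eq_zero_of_mulVec_eq_zero hr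
          (comp_intertwiner_sum_add_vecMulVec hφ z) u hd hTd

end MinimalIntertwiner

section Dominance

theorem card_mul_norm_le_of_sum_eq_zero {β E : Type*} [Fintype β] [NormedAddCommGroup E]
    [NormedSpace ℝ E] {f : β → E} {x : E} {M : ℝ} (B : Finset β) (hsum : ∑ b, f b = 0)
    (hx : ∀ b ∉ B, f b = x) (hxM : ‖x‖ ≤ M) (hfM : ∀ b, ‖f b‖ ≤ M) :
    Fintype.card β * ‖x‖ ≤ B.card * (2 * M) := by
  have hdiff : Fintype.card β • x = ∑ b ∈ B, (x - f b) := by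
    rw [Finset.sum_subset (Finset.subset_univ B) fun b _ hb => by rw [hx b hb, sub_self],
      Finset.sum_sub_distrib, hsum, sub_zero, Finset.sum_const, Finset.card_univ]
  calc Fintype.card β * ‖x‖ = ‖Fintype.card β • x‖ := by rw [RCLike.norm_nsmul ℝ, nsmul_eq_mul]
    _ ≤ ∑ b ∈ B, 2 * M := by
      rw [hdiff]
      exact norm_sum_le_of_le _ fun b _ => (norm_sub_le _ _).trans (by linarith [hfM b])
    _ = B.card * (2 * M) := by rw [Finset.sum_const, nsmul_eq_mul]

variable {K N ι : Type*} [Field K] [Fintype N] [Fintype ι] {P S : Matrix N ι K}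

theorem exists_mulVec_injective_fromCols (hS : Function.Injective S.mulVec)
    (h : 2 * Fintype.card ι ≤ Fintype.card N) :
    ∃ P : Matrix N ι K, Function.Injective (fromCols P S).mulVec := by
  classical
  obtain ⟨L, A, hLA⟩ := exists_mul_eq_one_of_card_le (K := K) (N := N) (ι := ι ⊕ ι)
    (by rw [Fintype.card_sum]; lia)
  rw [← fromRows_toRows L, ← fromCols_toCols A, fromRows_mul_fromCols, ← fromBlocks_one,
    fromBlocks_inj] at hLA
  obtain ⟨g, rfl⟩ := exists_GL_mul_eq (mulVec_injective_of_mul_eq_one hLA.2.2.2) hS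
  refine ⟨(g : Matrix N N K) * A.toCols₁, mulVec_injective_of_mul_eq_one
    (L := fromRows L.toRows₁ L.toRows₂ * ((g⁻¹ : GL N K) : Matrix N N K)) ?_⟩
  rw [← mul_fromCols, Matrix.mul_assoc, ← Matrix.mul_assoc _ (g : Matrix N N K), Units.inv_mul,
    Matrix.one_mul, fromRows_mul_fromCols, hLA.1, hLA.2.1, hLA.2.2.1, hLA.2.2.2, fromBlocks_one]

variable [DecidableEq N]

theorem exists_GL_mul_eq_sub_vecMulVec (hPS : Function.Injective (fromCols P S).mulVec)
    {w : N → K} (hw : w ∉ LinearMap.range (fromCols P S).mulVecLin) (d : ι → K) :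
    ∃ g : GL N K, (g : Matrix N N K) * S = S ∧ (g : Matrix N N K) * P = P - vecMulVec w d := by
  have hinj : Function.Injective (fromCols (P - vecMulVec w d) S).mulVec := by
    refine mulVec_injective_fromCols_iff.2 fun a b hab => ?_
    have hab' : P *ᵥ a + S *ᵥ b = (d ⬝ᵥ a) • w := by
      rw [sub_mulVec, vecMulVec_mulVec, op_smul_eq_smul] at hab
      rw [← sub_eq_zero, ← hab]
      abel
    have hda : d ⬝ᵥ a = 0 := by
      by_contra hda
      refine hw ((Submodule.smul_mem_iff _ hda).1 ⟨Sum.elim a b, ?_⟩)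
      rw [mulVecLin_apply, fromCols_mulVec, Sum.elim_comp_inl, Sum.elim_comp_inr, hab']
    exact mulVec_injective_fromCols_iff.1 hPS a b (by rw [hab', hda, zero_smul])
  obtain ⟨g, hg⟩ := exists_GL_mul_eq hPS hinj
  rw [mul_fromCols, fromCols_ext_iff] at hg
  exact ⟨g, hg.2, hg.1⟩

theorem apply_add_vecMulVec_row_eq {γ : Type*} {f : Matrix N ι K → γ}
    (hf : ∀ g : GL N K, (g : Matrix N N K) * S = S → ∀ T, f ((g : Matrix N N K) * T) = f T)
    (hPS : Function.Injective (fromCols P S).mulVec) (C : Matrix ι ι K) (r : ι) {w : N → K}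
    (hw : w ∉ LinearMap.range (fromCols P S).mulVecLin) :
    f (S - P * C + vecMulVec w (C r)) = f (S - P * C) := by
  classical
  obtain ⟨g, hgS, hgP⟩ := exists_GL_mul_eq_sub_vecMulVec hPS hw (Pi.single r 1)
  rw [← hf g hgS (S - P * C), Matrix.mul_sub, hgS, ← Matrix.mul_assoc, hgP, Matrix.sub_mul,
    vecMulVec_mul, single_one_vecMul, Matrix.row, sub_sub_eq_add_sub, add_sub_right_comm]

variable [Fintype K]

theorem card_pow_mul_norm_apply_sub_mul_le {f : Matrix N ι K → ℂ} {M : ℝ}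
    (hf : ∀ g : GL N K, (g : Matrix N N K) * S = S → ∀ T, f ((g : Matrix N N K) * T) = f T)
    (hsum : ∀ T z, z ≠ 0 → ∑ w, f (T + vecMulVec w z) = 0) (hM : ∀ T, ‖f T‖ ≤ M)
    (hPS : Function.Injective (fromCols P S).mulVec) {C : Matrix ι ι K} (hC : C ≠ 0) :
    (Fintype.card K : ℝ) ^ Fintype.card N * ‖f (S - P * C)‖ ≤
      (Fintype.card K : ℝ) ^ (2 * Fintype.card ι) * (2 * M) := by
  classical
  obtain ⟨r, hr⟩ := Function.ne_iff.1 hC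
  let B : Finset (N → K) := Finset.univ.image (fromCols P S).mulVec
  have hB : (B.card : ℝ) ≤ (Fintype.card K : ℝ) ^ (2 * Fintype.card ι) := by
    refine mod_cast Finset.card_image_le.trans_eq ?_
    rw [Finset.card_univ, Fintype.card_fun, Fintype.card_sum, two_mul]
  have h := card_mul_norm_le_of_sum_eq_zero B (hsum (S - P * C) _ hr)
    (fun w hw => apply_add_vecMulVec_row_eq hf hPS C r fun ⟨a, ha⟩ =>
      hw (Finset.mem_image.2 ⟨a, Finset.mem_univ a, ha⟩))
    (hM _) fun w => hM _
  rw [Fintype.card_fun, Nat.cast_pow] at h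
  have hM0 : 0 ≤ M := (norm_nonneg _).trans (hM 0)
  exact h.trans (by gcongr)

-- The term at `C = 0` has maximal norm and outweighs all the others together.
theorem sum_mul_apply_sub_mul_ne_zero [DecidableEq ι] {f : Matrix N ι K → ℂ}
    (hf : ∀ g : GL N K, (g : Matrix N N K) * S = S → ∀ T, f ((g : Matrix N N K) * T) = f T)
    (hsum : ∀ T z, z ≠ 0 → ∑ w, f (T + vecMulVec w z) = 0) (hS : f S ≠ 0)
    (hM : ∀ T, ‖f T‖ ≤ ‖f S‖) (hPS : Function.Injective (fromCols P S).mulVec)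
    (hN : Fintype.card ι * Fintype.card ι + 2 * Fintype.card ι + 2 ≤ Fintype.card N)
    {ε : Matrix ι ι K → ℂ} (hε : ∀ C, ‖ε C‖ = 1) : ∑ C, ε C * f (S - P * C) ≠ 0 := by
  classical
  intro hzero
  set q := (Fintype.card K : ℝ) with hq_def
  set s := Fintype.card ι
  have hq : 2 ≤ q := Nat.ofNat_le_cast.2 Fintype.one_lt_card
  have hcard : (Fintype.card (Matrix ι ι K) : ℝ) = q ^ (s * s) := by
    rw [hq_def, pow_mul]
    exact mod_cast (Fintype.card_fun (α := ι) (β := ι → K)).trans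
      (congrArg (· ^ s) Fintype.card_fun)
  have hS_le : ‖f S‖ ≤ ∑ C ∈ Finset.univ.erase (0 : Matrix ι ι K), ‖f (S - P * C)‖ := by
    rw [← Finset.sum_erase_add _ _ (Finset.mem_univ 0), Matrix.mul_zero, sub_zero] at hzero
    calc ‖f S‖ = ‖ε 0 * f S‖ := by rw [norm_mul, hε, one_mul]
      _ ≤ _ := by
        rw [eq_neg_of_add_eq_zero_right hzero, norm_neg]
        exact norm_sum_le_of_le _ fun C _ => by rw [norm_mul, hε, one_mul]
  have hlt : q ^ (s * s) * q ^ (2 * s) * 2 < q ^ Fintype.card N :=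
    calc q ^ (s * s) * q ^ (2 * s) * 2 ≤ q ^ (s * s) * q ^ (2 * s) * q := by gcongr
      _ = q ^ (s * s + 2 * s + 1) := by rw [pow_succ, pow_add]
      _ < q ^ Fintype.card N := pow_lt_pow_right₀ (by linarith) (by lia)
  refine absurd ?_ (mul_lt_mul_of_pos_right hlt (norm_pos_iff.2 hS)).not_ge
  calc q ^ Fintype.card N * ‖f S‖
      ≤ ∑ C ∈ Finset.univ.erase (0 : Matrix ι ι K), q ^ Fintype.card N * ‖f (S - P * C)‖ := by
        rw [← Finset.mul_sum]; gcongr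
    _ ≤ ∑ C ∈ Finset.univ.erase (0 : Matrix ι ι K), q ^ (2 * s) * (2 * ‖f S‖) :=
        Finset.sum_le_sum fun C hC =>
          card_pow_mul_norm_apply_sub_mul_le hf hsum hM hPS (Finset.ne_of_mem_erase hC)
    _ ≤ ∑ C : Matrix ι ι K, q ^ (2 * s) * (2 * ‖f S‖) :=
        Finset.sum_le_sum_of_subset_of_nonneg (Finset.subset_univ _) fun _ _ _ => by positivity
    _ = q ^ (s * s) * q ^ (2 * s) * 2 * ‖f S‖ := by
        rw [Finset.sum_const, nsmul_eq_mul, Finset.card_univ, hcard]; ring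

end Dominance

section MinimalTensorRank

theorem charSum_unipotentHom_mem_unipotentEigenspace {K N ι E : Type*} [Field K] [Fintype K]
    [Fintype N] [DecidableEq N] [Fintype ι] [DecidableEq ι] [AddCommGroup E] [Module ℂ E]
    (χ : AddChar K ℂ) {ρ : Representation ℂ (GL N K) E} {P S : Matrix N ι K} {L : Matrix ι N K}
    (hLP : L * P = 0) (hLS : L * S = 1) {u : E}
    (hu : ∀ g : GL N K, (g : Matrix N N K) * S = S → ρ g u = u) :
    charSum χ (ρ.comp (unipotentHom P L hLP)) (traceLinearMap ι K K) u ∈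
      unipotentEigenspace χ ρ P S := by
  set σ : Representation ℂ (Multiplicative (Matrix ι ι K)) E := ρ.comp (unipotentHom P L hLP)
  intro Y hYP
  have hYSP : Y * S * L * P = 0 := by rw [Matrix.mul_assoc, hLP, Matrix.mul_zero]
  have hrestP : (Y - Y * S * L) * P = 0 := by rw [Matrix.sub_mul, hYP, hYSP, sub_zero]
  have hrestS : (Y - Y * S * L) * S = 0 := by
    rw [Matrix.sub_mul, Matrix.mul_assoc (Y * S), hLS, Matrix.mul_one, sub_self]
  have hY : unipotent P Y hYP = unipotentHom P L hLP (.ofAdd (Y * S)) *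
      unipotent P (Y - Y * S * L) hrestP := by
    have h := unipotent_add hYSP hrestP (by rwa [add_sub_cancel])
    simp only [add_sub_cancel] at h
    exact h
  have hfix : ρ (unipotent P (Y - Y * S * L) hrestP) u = u :=
    hu _ (by rw [val_unipotent, Matrix.add_mul, Matrix.one_mul, Matrix.mul_assoc, hrestS,
      Matrix.mul_zero, add_zero])
  have hcomm : ρ (unipotent P (Y - Y * S * L) hrestP) (charSum χ σ (traceLinearMap ι K K) u) =
      charSum χ σ (traceLinearMap ι K K) u := by
    nth_rw 2 [← hfix]
    simp only [charSum_apply, map_sum, map_smul]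
    refine Finset.sum_congr rfl fun C _ => congrArg _ ?_
    rw [MonoidHom.comp_apply, ← Module.End.mul_apply, ← Module.End.mul_apply, ← map_mul,
      ← map_mul]
    exact congrArg (ρ · u) (unipotent_mul_comm hrestP (by rw [Matrix.mul_assoc, hLP]; simp))
  rw [hY, map_mul, Module.End.mul_apply, hcomm]
  exact apply_charSum σ _ (Y * S) u

variable {K E : Type} [Field K] [AddCommGroup E] [Module ℂ E] {m : ℕ}

theorem detHom_unipotent {ι : Type*} [Fintype ι] (P : Matrix (Fin m) ι K) (Y : Matrix ι (Fin m) K)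
    (h : Y * P = 0) : detHom m (unipotent P Y h) = 1 := by
  classical
  apply Units.ext
  change (1 + P * Y).det = 1
  rw [det_one_add_mul_comm, h, add_zero, det_one]

theorem twistRep_unipotent {ι : Type*} [Fintype ι] (α : Kˣ →* ℂˣ)
    (ρ : Representation ℂ (GL (Fin m) K) E) (P : Matrix (Fin m) ι K) (Y : Matrix ι (Fin m) K)
    (h : Y * P = 0) : twistRep α ρ (unipotent P Y h) = ρ (unipotent P Y h) := by
  change (α (detHom m _) : ℂ) • ρ _ = _
  rw [detHom_unipotent, map_one, Units.val_one, one_smul]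

theorem unipotentEigenspace_twistRep {ι : Type*} [Fintype ι] (χ : AddChar K ℂ) (α : Kˣ →* ℂˣ)
    (ρ : Representation ℂ (GL (Fin m) K) E) (P S : Matrix (Fin m) ι K) :
    unipotentEigenspace χ (twistRep α ρ) P S = unipotentEigenspace χ ρ P S := by
  ext v
  refine forall₂_congr fun Y h => ?_
  rw [twistRep_unipotent]

theorem intertwiner_charSum_unipotentHom_apply [Fintype K] {s : ℕ} (χ : AddChar K ℂ)
    {τ : Representation ℂ (GL (Fin m) K) E} {φ : E →ₗ[ℂ] (Matrix (Fin m) (Fin s) K → ℂ)}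
    (hφ : ∀ g, φ ∘ₗ τ g = permRep m s g ∘ₗ φ) {P S : Matrix (Fin m) (Fin s) K}
    {L : Matrix (Fin s) (Fin m) K} (hLP : L * P = 0) (hLS : L * S = 1) (u : E) :
    φ (charSum χ (τ.comp (unipotentHom P L hLP)) (traceLinearMap (Fin s) K K) u) S =
      ∑ C : Matrix (Fin s) (Fin s) K, χ (-C.trace) * φ u (S - P * C) := by
  rw [charSum_apply, map_sum, Finset.sum_apply]
  refine Finset.sum_congr rfl fun C _ => ?_
  have hinv : (((unipotentHom P L hLP (.ofAdd C))⁻¹ : GL (Fin m) K) :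
      Matrix (Fin m) (Fin m) K) * S = S - P * C := by
    change (1 - P * (C * L) : Matrix (Fin m) (Fin m) K) * S = S - P * C
    rw [Matrix.sub_mul, Matrix.one_mul, Matrix.mul_assoc, Matrix.mul_assoc, hLS, Matrix.mul_one]
  rw [map_smul, Pi.smul_apply, smul_eq_mul, MonoidHom.comp_apply, apply_intertwiner hφ, hinv]
  rfl

theorem exists_unipotentEigenspace_ne_bot_of_occurs [Finite K] (χ : AddChar K ℂ)
    {τ : Representation ℂ (GL (Fin m) K) E} {r : ℕ} (hr : ¬ Occurs τ (permRep m r))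
    (hr1 : Occurs τ (permRep m (r + 1))) (hm : (r + 1) * (r + 1) + 2 * (r + 1) + 2 ≤ m) :
    ∃ P S : Matrix (Fin m) (Fin (r + 1)) K, Function.Injective (fromCols P S).mulVec ∧
      unipotentEigenspace χ τ P S ≠ ⊥ := by
  have := Fintype.ofFinite K
  obtain ⟨φ, hφ0, hφ⟩ := hr1
  obtain ⟨u, S, hS0, hSmax, hfix⟩ := exists_stabilizer_fixed_of_intertwiner_ne_zero hφ0 hφ
  have hS := mulVec_injective_of_intertwiner_apply_ne_zero hr hφ hS0
  obtain ⟨P, hPS⟩ := exists_mulVec_injective_fromCols hS (by simp only [Fintype.card_fin]; lia)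
  obtain ⟨L, hL⟩ := exists_mul_eq_one_of_mulVec_injective hPS
  rw [← fromRows_toRows L, fromRows_mul_fromCols, ← fromBlocks_one, fromBlocks_inj] at hL
  obtain ⟨-, -, hLP, hLS⟩ := hL
  refine ⟨P, S, hPS, Submodule.ne_bot_iff _ |>.2
    ⟨_, charSum_unipotentHom_mem_unipotentEigenspace χ hLP hLS hfix, fun h0 => ?_⟩⟩
  refine sum_mul_apply_sub_mul_ne_zero (f := φ u) (ε := fun C => χ (-C.trace)) (fun g hg T => ?_)
    (fun T z hz => sum_intertwiner_apply_add_vecMulVec hr hφ u T hz) hS0 hSmax hPS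
    (by simpa only [Fintype.card_fin] using hm) (fun C => AddChar.norm_apply ..) ?_
  · nth_rw 1 [← hfix g hg]
    rw [apply_intertwiner hφ, ← Matrix.mul_assoc, Units.inv_mul, Matrix.one_mul]
  · rw [← intertwiner_charSum_unipotentHom_apply χ hφ hLP hLS, h0, map_zero, Pi.zero_apply]

end MinimalTensorRank

section Restriction

variable {K : Type} [Field K] {n m : ℕ} (h : n ≤ m)

theorem val_glEmbed (g : GL (Fin n) K) :
    (glEmbed h g : Matrix (Fin m) (Fin m) K) =
      1 + firstCoords K h * ((g - 1 : Matrix (Fin n) (Fin n) K) * (firstCoords K h)ᵀ) := by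
  let e : Fin n ⊕ Fin (m - n) ≃ Fin m := finSumFinEquiv.trans (finCongr (by lia))
  have he_inl (a) : e (.inl a) = Fin.castLE h a := rfl
  have he_inr (b) : e (.inr b) ∉ Set.range (Fin.castLE h) := by
    rintro ⟨a, ha⟩
    rw [← he_inl] at ha
    exact Sum.inl_ne_inr (e.injective ha)
  have hval : (glEmbed h g : Matrix (Fin m) (Fin m) K) =
    (fromBlocks (g : Matrix (Fin n) (Fin n) K) 0 0 1).submatrix e.symm e.symm := rfl
  have hone : (1 : Matrix (Fin m) (Fin m) K) = (fromBlocks 1 0 0 1).submatrix e.symm e.symm := by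
    rw [fromBlocks_one, submatrix_one_equiv]
  ext i j
  obtain ⟨i, rfl⟩ := e.surjective i
  obtain ⟨j, rfl⟩ := e.surjective j
  rw [hval, hone, Matrix.add_apply, submatrix_apply, submatrix_apply, e.symm_apply_apply,
    e.symm_apply_apply, firstCoords]
  rcases i with i | i
  · rw [he_inl, coordMatrix_mul_apply (Fin.castLE_injective h)]
    rcases j with j | j
    · rw [he_inl, mul_coordMatrix_transpose_apply (Fin.castLE_injective h), fromBlocks_apply₁₁,
        fromBlocks_apply₁₁, Matrix.sub_apply, add_sub_cancel]
    · rw [mul_coordMatrix_transpose_apply_of_notMem (he_inr j), add_zero, fromBlocks_apply₁₂,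
        fromBlocks_apply₁₂]
  · rw [coordMatrix_mul_apply_of_notMem (he_inr i), add_zero]
    rcases j with j | j <;> rfl

theorem detHom_glEmbed (g : GL (Fin n) K) : detHom m (glEmbed h g) = detHom n g := by
  apply Units.ext
  change (glEmbed h g : Matrix (Fin m) (Fin m) K).det = (g : Matrix (Fin n) (Fin n) K).det
  rw [val_glEmbed, det_one_add_mul_comm, Matrix.mul_assoc, firstCoords_transpose_mul_self,
    Matrix.mul_one, add_sub_cancel]

theorem firstCoords_transpose_mul_glEmbed_mul {κ : Type*} (g : GL (Fin n) K)
    (T : Matrix (Fin m) κ K) :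
    (firstCoords K h)ᵀ * ((glEmbed h g : Matrix (Fin m) (Fin m) K) * T) =
      (g : Matrix (Fin n) (Fin n) K) * ((firstCoords K h)ᵀ * T) := by
  rw [val_glEmbed, Matrix.add_mul, Matrix.one_mul, Matrix.mul_add, Matrix.mul_assoc,
    ← Matrix.mul_assoc _ᵀ (firstCoords K h), firstCoords_transpose_mul_self, Matrix.one_mul,
    Matrix.mul_assoc, Matrix.sub_mul, Matrix.one_mul, add_sub_cancel]

/-- The matrix obtained from `T` by replacing its first `n` rows by those of `X`. -/
def replaceFirstRows {κ : Type*} (h : n ≤ m) (T : Matrix (Fin m) κ K) (X : Matrix (Fin n) κ K) :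
    Matrix (Fin m) κ K :=
  T + firstCoords K h * (X - (firstCoords K h)ᵀ * T)

theorem glEmbed_mul_replaceFirstRows {κ : Type*} (g : GL (Fin n) K) (T : Matrix (Fin m) κ K)
    (X : Matrix (Fin n) κ K) :
    (glEmbed h g : Matrix (Fin m) (Fin m) K) * replaceFirstRows h T X =
      replaceFirstRows h T ((g : Matrix (Fin n) (Fin n) K) * X) := by
  have hX : (firstCoords K h)ᵀ * replaceFirstRows h T X = X := by
    rw [replaceFirstRows, Matrix.mul_add, ← Matrix.mul_assoc, firstCoords_transpose_mul_self,
      Matrix.one_mul, add_sub_cancel]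
  rw [val_glEmbed, Matrix.add_mul, Matrix.one_mul, Matrix.mul_assoc, Matrix.mul_assoc, hX,
    replaceFirstRows, replaceFirstRows, add_assoc, ← Matrix.mul_add, Matrix.sub_mul,
    Matrix.one_mul]
  congr 2
  abel

variable {E : Type} [AddCommGroup E] [Module ℂ E]

theorem occurs_permRep_comp_glEmbed_iff {π : Representation ℂ (GL (Fin n) K) E} {s : ℕ} :
    Occurs π ((permRep m s).comp (glEmbed h)) ↔ Occurs π (permRep n s) := by
  constructor
  · rintro ⟨φ, hφ0, hφ⟩
    obtain ⟨u, hu⟩ := DFunLike.ne_iff.1 hφ0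
    obtain ⟨T, hT⟩ := Function.ne_iff.1 hu
    refine ⟨LinearMap.funLeft ℂ ℂ (replaceFirstRows h T) ∘ₗ φ, fun h0 => hT ?_,
      fun g => LinearMap.ext fun v => funext fun X => ?_⟩
    · have := congrFun (LinearMap.congr_fun h0 u) ((firstCoords K h)ᵀ * T)
      rwa [LinearMap.comp_apply, LinearMap.funLeft_apply, replaceFirstRows, sub_self,
        Matrix.mul_zero, add_zero] at this
    · change φ (π g v) (replaceFirstRows h T X) =
        φ v (replaceFirstRows h T (((g⁻¹ : GL (Fin n) K) : Matrix (Fin n) (Fin n) K) * X))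
      rw [← glEmbed_mul_replaceFirstRows, map_inv]
      exact congrFun (LinearMap.congr_fun (hφ g) v) _
  · rintro ⟨φ, hφ0, hφ⟩
    refine ⟨LinearMap.funLeft ℂ ℂ ((firstCoords K h)ᵀ * ·) ∘ₗ φ, fun h0 => hφ0 ?_,
      fun g => LinearMap.ext fun v => funext fun T => ?_⟩
    · refine LinearMap.ext fun v => funext fun X => ?_
      have := congrFun (LinearMap.congr_fun h0 v) (firstCoords K h * X)
      rwa [LinearMap.comp_apply, LinearMap.funLeft_apply, ← Matrix.mul_assoc,
        firstCoords_transpose_mul_self, Matrix.one_mul] at this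
    · change φ (π g v) ((firstCoords K h)ᵀ * T) = φ v ((firstCoords K h)ᵀ *
        ((((glEmbed h g)⁻¹ : GL (Fin m) K) : Matrix (Fin m) (Fin m) K) * T))
      rw [← map_inv, firstCoords_transpose_mul_glEmbed_mul, apply_intertwiner hφ]

theorem occurs_permRep_mono {τ : Representation ℂ (GL (Fin m) K) E} {s t : ℕ} (hst : s ≤ t)
    (hτ : Occurs τ (permRep m s)) : Occurs τ (permRep m t) := by
  obtain ⟨φ, hφ0, hφ⟩ := hτ
  obtain ⟨L, A, hLA⟩ := exists_mul_eq_one_of_card_le (K := K) (N := Fin t) (ι := Fin s)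
    (by simpa only [Fintype.card_fin] using hst)
  refine ⟨LinearMap.funLeft ℂ ℂ (· * A) ∘ₗ φ, fun h0 => hφ0 ?_,
    fun g => LinearMap.ext fun v => funext fun T => ?_⟩
  · refine LinearMap.ext fun v => funext fun X => ?_
    have := congrFun (LinearMap.congr_fun h0 v) (X * L)
    rwa [LinearMap.comp_apply, LinearMap.funLeft_apply, Matrix.mul_assoc, hLA,
      Matrix.mul_one] at this
  · change φ (τ g v) (T * A) = φ v (_ * T * A)
    rw [apply_intertwiner hφ, Matrix.mul_assoc]

theorem twistRep_comp_glEmbed (α : Kˣ →* ℂˣ) (ρ : Representation ℂ (GL (Fin m) K) E) :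
    (twistRep α ρ).comp (glEmbed h) = twistRep α (ρ.comp (glEmbed h)) := by
  ext1 g
  change (α (detHom m (glEmbed h g)) : ℂ) • ρ (glEmbed h g) = (α (detHom n g) : ℂ) • _
  rw [detHom_glEmbed]
  rfl

theorem occurs_twistRep_iff {W : Type} [AddCommGroup W] [Module ℂ W] {α : Kˣ →* ℂˣ}
    {ρ : Representation ℂ (GL (Fin m) K) E} {σ : Representation ℂ (GL (Fin m) K) W} :
    Occurs (twistRep α ρ) σ ↔ Occurs ρ (twistRep α⁻¹ σ) := by
  refine exists_congr fun φ => and_congr_right fun _ => forall_congr' fun g => ?_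
  change φ ∘ₗ (α (detHom m g) • ρ g) = _ ↔ φ ∘ₗ ρ g = (α (detHom m g))⁻¹ • (σ g ∘ₗ φ)
  rw [eq_inv_smul_iff, φ.comp_smul]

end Restriction

section GeneratedSubrepresentation

variable {G H : Type} [Group G] [Group H] {E V W : Type} [AddCommGroup E] [Module ℂ E]
  [AddCommGroup V] [Module ℂ V] [AddCommGroup W] [Module ℂ W]

/-- The subrepresentation of `ρ` generated by a subspace `p`. -/
def generatedSubrepresentation (ρ : Representation ℂ G E) (p : Submodule ℂ E) :
    Subrepresentation ρ where
  toSubmodule := ⨆ g, p.map (ρ g)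
  apply_mem_toSubmodule g x hx := by
    have hle : (⨆ g, p.map (ρ g)) ≤ (⨆ g, p.map (ρ g)).comap (ρ g) := iSup_le fun g' => by
      rw [← Submodule.map_le_iff_le_comap, ← Submodule.map_comp, ← Module.End.mul_eq_comp,
        ← map_mul]
      exact le_iSup (fun g => p.map (ρ g)) (g * g')
    exact hle hx

theorem le_generatedSubrepresentation (ρ : Representation ℂ G E) (p : Submodule ℂ E) :
    p ≤ (generatedSubrepresentation ρ p).toSubmodule := by
  have hone : p.map (ρ 1) = p := by rw [map_one]; exact Submodule.map_id p
  exact hone.symm.le.trans (le_iSup (fun g => p.map (ρ g)) 1)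

theorem eq_zero_of_forall_mem_apply_eq_zero {ρ : Representation ℂ G E} {p : Submodule ℂ E}
    {τ : Representation ℂ G W} {φ : (generatedSubrepresentation ρ p).toSubmodule →ₗ[ℂ] W}
    (hφ : ∀ g, φ ∘ₗ (generatedSubrepresentation ρ p).toRepresentation g = τ g ∘ₗ φ)
    (hp : ∀ x : (generatedSubrepresentation ρ p).toSubmodule, (x : E) ∈ p → φ x = 0) : φ = 0 := by
  let σ := (generatedSubrepresentation ρ p).toSubmodule
  have hker : σ ≤ φ.ker.map σ.subtype := iSup_le fun g => by
    rintro _ ⟨x, hx, rfl⟩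
    let y : σ := ⟨x, le_generatedSubrepresentation ρ p hx⟩
    refine ⟨(generatedSubrepresentation ρ p).toRepresentation g y, ?_, rfl⟩
    have hgy := LinearMap.congr_fun (hφ g) y
    rwa [LinearMap.comp_apply, LinearMap.comp_apply, hp y hx, map_zero] at hgy
  ext x
  obtain ⟨y, hy, hyx⟩ := hker x.2
  rwa [← Subtype.ext hyx]

theorem Occurs.exists_subrepresentation {π : Representation ℂ H V} {ρ : Representation ℂ G E}
    {j : H →* G} (h : Occurs π (ρ.comp j)) :
    ∃ σ : Subrepresentation ρ, Nontrivial σ.toSubmodule ∧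
      ∀ {W : Type} [AddCommGroup W] [Module ℂ W] {τ : Representation ℂ G W},
        Occurs σ.toRepresentation τ → Occurs π (τ.comp j) := by
  obtain ⟨ψ, hψ0, hψ⟩ := h
  let σ := generatedSubrepresentation ρ ψ.range
  have hmem (v : V) : ψ v ∈ σ.toSubmodule :=
    le_generatedSubrepresentation ρ _ (LinearMap.mem_range_self ψ v)
  refine ⟨σ, ?_, fun {W _ _ τ} ⟨φ, hφ0, hφ⟩ => ⟨φ ∘ₗ ψ.codRestrict _ hmem, fun h0 => hφ0 ?_,
    fun g => LinearMap.ext fun v => ?_⟩⟩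
  · obtain ⟨v, hv⟩ := DFunLike.ne_iff.1 hψ0
    exact ⟨⟨ψ v, hmem v⟩, 0, fun h => hv (congrArg Subtype.val h)⟩
  · refine eq_zero_of_forall_mem_apply_eq_zero hφ ?_
    rintro ⟨_, _⟩ ⟨v, rfl⟩
    exact LinearMap.congr_fun h0 v
  · have hψg : ψ.codRestrict _ hmem (π g v) = σ.toRepresentation (j g) (ψ.codRestrict _ hmem v) :=
      Subtype.ext (LinearMap.congr_fun (hψ g) v)
    change φ (ψ.codRestrict _ hmem (π g v)) = _
    rw [hψg]
    exact LinearMap.congr_fun (hφ (j g)) _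

end GeneratedSubrepresentation

section AsymptoticRank

variable {F : Type} [Field F] [Fintype F] [DecidableEq F] {m n k : ℕ} {χ : AddChar F ℂ}
  {E V : Type} [AddCommGroup E] [Module ℂ E] [AddCommGroup V] [Module ℂ V]

theorem CharAppears.of_subrepresentation {ρ : Representation ℂ (GL (Fin m) F) E}
    {σ : Subrepresentation ρ} {a b : ℕ} {hab : a + b ≤ m} {T : Matrix (Fin b) (Fin a) F}
    (h : CharAppears χ σ.toRepresentation hab T) : CharAppears χ ρ hab T := by
  obtain ⟨v, hv0, hv⟩ := h
  exact ⟨v, fun h => hv0 (Subtype.ext h), fun X => congrArg Subtype.val (hv X)⟩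

theorem exists_occurs_twistRep_permRep_of_rank_le [FiniteDimensional ℂ E] [Nontrivial E]
    (hχ : χ ≠ 1) {ρ : Representation ℂ (GL (Fin m) F) E}
    (hρ : ∀ T, CharAppears χ ρ (show m / 2 + (m - m / 2) ≤ m by omega) T → T.rank ≤ k)
    (hm : 2 * k * (2 * k) + 2 * (2 * k) + 2 ≤ m) :
    ∃ α : Fˣ →* ℂˣ, Occurs (twistRep α ρ) (permRep m k) := by
  classical
  obtain ⟨t, ht, α, hα⟩ := exists_occurs_twistRep_permRep hχ (by lia) hρ
  have hex : ∃ s, Occurs (twistRep α ρ) (permRep m s) := ⟨t, hα⟩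
  refine ⟨α, occurs_permRep_mono ?_ (Nat.find_spec hex)⟩
  by_contra! hk
  obtain ⟨r, hr⟩ := Nat.exists_eq_add_one_of_ne_zero hk.ne_bot
  have hrk : r + 1 ≤ 2 * k := hr ▸ (Nat.find_min' hex hα).trans ht
  have hrm : (r + 1) * (r + 1) ≤ 2 * k * (2 * k) := Nat.mul_le_mul hrk hrk
  obtain ⟨P, S, hPS, hne⟩ := exists_unipotentEigenspace_ne_bot_of_occurs χ
    (Nat.find_min hex (m := r) (by lia)) (hr ▸ Nat.find_spec hex) (by lia)
  rw [unipotentEigenspace_twistRep] at hne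
  obtain ⟨v, hv, hv0⟩ := Submodule.exists_mem_ne_zero_of_ne_bot hne
  have hle := card_le_of_mem_unipotentEigenspace hχ _ hρ (by rw [Fintype.card_fin]; lia)
    (by rw [Fintype.card_fin]; lia) hPS hv0 hv
  rw [Fintype.card_fin] at hle
  lia

theorem exists_occurs_twistRep_of_asympRankLE (hχ : χ ≠ 1)
    {π : Representation ℂ (GL (Fin n) F) V} (h : AsympRankLE χ π k) :
    ∃ α : Fˣ →* ℂˣ, Occurs (twistRep α π) (permRep n k) := by
  obtain ⟨M, hM⟩ := h
  obtain ⟨hnm, E, _, _, _, ρ, -, hρ, hπ⟩ :=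
    hM (max M (2 * k * (2 * k) + 2 * (2 * k) + 2)) (le_max_left _ _)
  obtain ⟨σ, _, hσ⟩ := hπ.exists_subrepresentation
  obtain ⟨α, hα⟩ := exists_occurs_twistRep_permRep_of_rank_le (ρ := σ.toRepresentation) hχ
    (fun T hT => hρ T hT.of_subrepresentation) (le_max_right _ _)
  have hπα := hσ (occurs_twistRep_iff.1 hα)
  rw [twistRep_comp_glEmbed, ← occurs_twistRep_iff] at hπα
  exact ⟨α, (occurs_permRep_comp_glEmbed_iff hnm).1 hπα⟩

theorem twistRep_uU {a b : ℕ} (hab : a + b ≤ m) (α : Fˣ →* ℂˣ)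
    (ρ : Representation ℂ (GL (Fin m) F) E) (X : Matrix (Fin a) (Fin b) F) :
    twistRep α ρ (uU m a b hab X) = ρ (uU m a b hab X) := by
  have ha : a ≤ m := by lia
  have hb : b ≤ m := by lia
  rw [uU_eq_unipotentHom hab ha hb]
  refine twistRep_unipotent α ρ _ _ ?_
  rw [Matrix.mul_assoc, lastCoords_transpose_mul_firstCoords hab, Matrix.mul_zero]

theorem trace_eq_zero_of_permRep_uU_eq_smul {a b : ℕ} (hχ : χ ≠ 1) (hab : a + b ≤ m)
    (hb : b ≤ m) {T : Matrix (Fin b) (Fin a) F} {f : Matrix (Fin m) (Fin k) F → ℂ}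
    {S : Matrix (Fin m) (Fin k) F} (hS : f S ≠ 0)
    (hf : ∀ X, permRep m k (uU m a b hab X) f = χ (T * X).trace • f)
    {X : Matrix (Fin a) (Fin b) F} (hX : X * ((lastCoords F hb)ᵀ * S) = 0) :
    (T * X).trace = 0 := by
  refine eq_of_forall_addChar_mul_eq hχ fun c => ?_
  have hfix : ((1 - blockEmbed m a b (c • X)) * S : Matrix (Fin m) (Fin k) F) = S := by
    rw [blockEmbed_eq (by lia) hb, Matrix.sub_mul, Matrix.one_mul, Matrix.mul_assoc,
      Matrix.mul_assoc, Matrix.smul_mul, hX, smul_zero, Matrix.mul_zero, sub_zero]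
  have hS' : f ((1 - blockEmbed m a b (c • X)) * S) = χ (T * (c • X)).trace * f S :=
    congrFun (hf (c • X)) S
  rw [hfix, Matrix.mul_smul, trace_smul, smul_eq_mul] at hS'
  rw [mul_zero, AddChar.map_zero_eq_one]
  exact mul_right_cancel₀ hS (by rw [one_mul, ← hS'])

theorem rank_le_of_charAppears_twistRep_permRep {a b : ℕ} (hχ : χ ≠ 1) {hab : a + b ≤ m}
    {α : Fˣ →* ℂˣ} {T : Matrix (Fin b) (Fin a) F}
    (hT : CharAppears χ (twistRep α (permRep m k)) hab T) : T.rank ≤ k := by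
  obtain ⟨f, hf0, hf⟩ := hT
  obtain ⟨S, hS⟩ := Function.ne_iff.1 hf0
  have hb : b ≤ m := by lia
  have hf' (X) : permRep m k (uU m a b hab X) f = χ (T * X).trace • f := by
    rw [← hf, twistRep_uU]
  have hrange : LinearMap.range T.mulVecLin ≤
      LinearMap.range ((lastCoords F hb)ᵀ * S).mulVecLin := by
    rintro _ ⟨p, rfl⟩
    by_contra hp
    obtain ⟨y, hyp, hy⟩ := exists_dotProduct_ne_zero_of_notMem hp
    have hX : vecMulVec p y * ((lastCoords F hb)ᵀ * S) = 0 := by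
      rw [vecMulVec_mul, vecMul_eq_zero_iff_forall_range.2 hy]
      exact ext fun _ _ => mul_zero _
    refine hyp ?_
    rw [dotProduct_comm, mulVecLin_apply, ← trace_vecMulVec, ← mul_vecMulVec]
    exact trace_eq_zero_of_permRep_uU_eq_smul hχ hab hb hS hf' hX
  calc T.rank ≤ ((lastCoords F hb)ᵀ * S).rank := Submodule.finrank_mono hrange
    _ ≤ k := rank_le_width _

theorem asympRankLE_of_occurs_twistRep (hχ : χ ≠ 1) {π : Representation ℂ (GL (Fin n) F) V}
    {α : Fˣ →* ℂˣ} (h : Occurs (twistRep α π) (permRep n k)) : AsympRankLE χ π k := by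
  refine ⟨max n (2 * k + 2), fun m hm => ?_⟩
  have hnm : n ≤ m := (le_max_left ..).trans hm
  have hkm : 2 * k + 2 ≤ m := (le_max_right ..).trans hm
  refine ⟨hnm, _, _, _, inferInstance, twistRep α⁻¹ (permRep m k), by lia,
    fun T hT => rank_le_of_charAppears_twistRep_permRep hχ hT, ?_⟩
  rw [twistRep_comp_glEmbed, ← occurs_twistRep_iff, occurs_permRep_comp_glEmbed_iff]
  exact h

theorem asymptotic_rank_eq_tensor_rank_general (hχ : χ ≠ 1)
    (π : Representation ℂ (GL (Fin n) F) V) : {k : ℕ | AsympRankLE χ π k} =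
      {k : ℕ | ∃ α : Fˣ →* ℂˣ, Occurs (twistRep α π) (permRep n k)} :=
  Set.ext fun _ => ⟨exists_occurs_twistRep_of_asympRankLE hχ,
    fun ⟨_, h⟩ => asympRankLE_of_occurs_twistRep hχ h⟩

end AsymptoticRank

/-- Theorem 11.4: asymptotic rank equals tensor rank for all
irreducible representations of `GL_n(F_q)`.  Both ranks are expressed as the
least element (`sInf`) of the corresponding set of upper bounds. -/
theorem asymptotic_rank_eq_tensor_rank
    (χ₀ : AddChar F ℂ) (hχ₀ : χ₀ ≠ 1)
    {n : ℕ} {V : Type} [AddCommGroup V] [Module ℂ V] [FiniteDimensional ℂ V]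
    (π : Representation ℂ (GL (Fin n) F) V) (hπ : IsIrred π) :
    sInf {k : ℕ | AsympRankLE χ₀ π k}
      = sInf {k : ℕ | ∃ α : Fˣ →* ℂˣ, Occurs (twistRep α π) (permRep n k)} :=
  congrArg sInf (asymptotic_rank_eq_tensor_rank_general hχ₀ π)

end Stmt19
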